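/- arXiv:0806.4208 — 2 statements merged into one kernel-verified Lean document; each statement's English description precedes it below -/
import Mathlib

section
/- In any complex of Construction 1 (the general three-column red/blue construction), any four vertices contain three that do not form a triangle; equivalently, the complex has no face on four vertices and satisfies the hypothesis of Turán's (3,4)-problem. -/
/-- The missing-triangle predicate of Construction 1.  Vertices live in a linearly
ordered type; `col v` is the (cyclically arranged) column of `v`, with the column to
the right of `c` being `c + 1` and the column to the left being `c + 2`; `red v = true`
means `v` is colored red, `red v = false` means blue.  The predicate is to be applied
to triples with `z < y < x` and expresses that `{x, y, z}` is one of the four missing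
types:
1. three vertices in one column with the top two of the same color;
2. two vertices in one column with the higher of the two red, and one vertex in the
   column to its right;
3. two vertices in one column with the higher of the two blue, and one vertex in the
   column to its left;
4. two vertices in one column and one in another, the highest vertex in the left column
   (of the two columns involved) blue, the highest vertex in the right column red, and
   the two lowest vertices in the same column. -/
def MissingTriple {α : Type*} (col : α → Fin 3) (red : α → Bool) (x y z : α) : Prop :=
  -- type 1
  (col x = col y ∧ col y = col z ∧ red x = red y) ∨
  -- type 2
  ((col x = col y ∧ col z = col x + 1 ∧ red x = true) ∨
   (col x = col z ∧ col y = col x + 1 ∧ red x = true) ∨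
   (col y = col z ∧ col x = col y + 1 ∧ red y = true)) ∨
  -- type 3
  ((col x = col y ∧ col z = col x + 2 ∧ red x = false) ∨
   (col x = col z ∧ col y = col x + 2 ∧ red x = false) ∨
   (col y = col z ∧ col x = col y + 2 ∧ red y = false)) ∨
  -- type 4
  (col y = col z ∧ col x ≠ col y ∧
    ((col x = col y + 1 ∧ red y = false ∧ red x = true) ∨
     (col y = col x + 1 ∧ red x = false ∧ red y = true)))

/-!
In a triangle with exactly two vertices in one column, the color of the higher of the two, `u`,
determines the column of the third vertex: left of `u` if `u` is red, right of `u` if it is blue.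
Suppose every three of at least four vertices form a triangle. If a column has three vertices, the
upper two differ in color and so no vertex can lie outside the column; but among four vertices in
one column the top three would have pairwise different colors. So every column has at most two
vertices. Some column has exactly two, and all other vertices lie in the one column determined by
the higher of these. Thus two columns have two vertices each and determine each other, so their
tops have different colors, and the higher top forms a missing triangle of type 4 with the two
vertices of the other column.
-/

/-- The column in which the third vertex of a triangle must lie when the triangle has exactly two
vertices in the column of `u` and `u` is the higher of them. -/
def facingColumn {α : Type*} (col : α → Fin 3) (red : α → Bool) (u : α) : Fin 3 :=
  if red u then col u + 2 else col u + 1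

/-- Every three vertices in `α` form a triangle. The arguments of `MissingTriple` are positional, so
each three-element set is tested once, listed in decreasing order. -/
def HasAllTriangles {α : Type*} [LT α] (col : α → Fin 3) (red : α → Bool) : Prop :=
  ∀ ⦃x y z : α⦄, z < y → y < x → ¬ MissingTriple col red x y z

section FacingColumn

variable {α : Type*} {col : α → Fin 3} {red : α → Bool} {u v x y z : α}

theorem red_eq_of_facingColumn_eq (hcol : col u = col v)
    (hfacing : facingColumn col red u = facingColumn col red v) : red u = red v := by
  grind [facingColumn]

theorem red_ne_of_mutually_facing (hu : col u = facingColumn col red v)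
    (hv : col v = facingColumn col red u) : red u ≠ red v := by
  grind [facingColumn]

theorem eq_add_one_or_eq_add_two_of_ne : ∀ {i j : Fin 3}, i ≠ j → i = j + 1 ∨ i = j + 2 := by
  decide

theorem col_bot_eq_facingColumn (h : ¬ MissingTriple col red x y z) (hxy : col x = col y)
    (hz : col z ≠ col x) : col z = facingColumn col red x := by
  have := eq_add_one_or_eq_add_two_of_ne hz
  grind [MissingTriple, facingColumn]

theorem col_mid_eq_facingColumn (h : ¬ MissingTriple col red x y z) (hxz : col x = col z)
    (hy : col y ≠ col x) : col y = facingColumn col red x := by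
  have := eq_add_one_or_eq_add_two_of_ne hy
  grind [MissingTriple, facingColumn]

theorem col_top_eq_facingColumn (h : ¬ MissingTriple col red x y z) (hyz : col y = col z)
    (hx : col x ≠ col y) : col x = facingColumn col red y := by
  have := eq_add_one_or_eq_add_two_of_ne hx
  grind [MissingTriple, facingColumn]

theorem red_top_eq_red_mid (h : ¬ MissingTriple col red x y z) (hyz : col y = col z)
    (hx : col x ≠ col y) : red x = red y := by
  have := eq_add_one_or_eq_add_two_of_ne hx
  have := eq_add_one_or_eq_add_two_of_ne hx.symm
  grind [MissingTriple]

end FacingColumn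

namespace HasAllTriangles

variable {α : Type*} [LinearOrder α] {col : α → Fin 3} {red : α → Bool} {t u v w u' v' : α}

theorem col_eq_facingColumn (h : HasAllTriangles col red) (hvu : v < u) (huv : col u = col v)
    (ht : col t ≠ col u) : col t = facingColumn col red u := by
  have htu : t ≠ u := ne_of_apply_ne col ht
  have htv : t ≠ v := ne_of_apply_ne col (huv ▸ ht)
  rcases htu.lt_or_gt with htu | hut
  · rcases htv.lt_or_gt with htv | hvt
    · exact col_bot_eq_facingColumn (h htv hvu) huv ht
    · exact col_mid_eq_facingColumn (h hvt htu) huv ht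
  · exact col_top_eq_facingColumn (h hvu hut) huv ht

theorem red_ne_of_three_in_column (h : HasAllTriangles col red) (hwv : w < v) (hvu : v < u)
    (huv : col u = col v) (hvw : col v = col w) : red u ≠ red v :=
  fun hred ↦ h hwv hvu (Or.inl ⟨huv, hvw, hred⟩)

theorem col_eq_of_three_in_column (h : HasAllTriangles col red) (hwv : w < v) (hvu : v < u)
    (huv : col u = col v) (hvw : col v = col w) (t : α) : col t = col u := by
  by_contra ht
  have facing_u : col t = facingColumn col red u := h.col_eq_facingColumn hvu huv ht
  have facing_v : col t = facingColumn col red v := h.col_eq_facingColumn hwv hvw (huv ▸ ht)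
  exact h.red_ne_of_three_in_column hwv hvu huv hvw
    (red_eq_of_facingColumn_eq huv (facing_u.symm.trans facing_v))

theorem not_four_in_column (h : HasAllTriangles col red) (hwv : w < v) (hvu : v < u) (hut : u < t)
    (htu : col t = col u) (huv : col u = col v) (hvw : col v = col w) : False := by
  have red_tu : red t ≠ red u := h.red_ne_of_three_in_column hvu hut htu huv
  have red_tv : red t ≠ red v := h.red_ne_of_three_in_column hwv (hvu.trans hut) (htu.trans huv) hvw
  have red_uv : red u ≠ red v := h.red_ne_of_three_in_column hwv hvu huv hvw
  exact red_uv ((Bool.eq_not.2 red_tu.symm).trans (Bool.eq_not.2 red_tv.symm).symm)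

theorem col_eq_of_two_pairs (h : HasAllTriangles col red) (hvu : v < u) (hvu' : v' < u')
    (huv : col u = col v) (huv' : col u' = col v') : col u = col u' := by
  wlog htop : u' ≤ u generalizing u v u' v'
  · exact (this hvu' hvu huv' huv (le_of_not_ge htop)).symm
  by_contra hne
  have red_ne : red u ≠ red u' := red_ne_of_mutually_facing
    (h.col_eq_facingColumn hvu' huv' hne) (h.col_eq_facingColumn hvu huv (Ne.symm hne))
  have u'_lt_u : u' < u := htop.lt_of_ne (ne_of_apply_ne col (Ne.symm hne))
  exact red_ne (red_top_eq_red_mid (h hvu' u'_lt_u) huv' hne)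

variable [Fintype α]

theorem card_column_le_two (h : HasAllTriangles col red) (hcard : 4 ≤ Fintype.card α)
    (k : Fin 3) : Finset.card {v | col v = k} ≤ 2 := by
  by_contra! hk
  let column : Fin 3 ↪o α := Finset.orderEmbOfCardLe {v | col v = k} hk
  have col_column (i : Fin 3) : col (column i) = k := by
    simpa using Finset.orderEmbOfCardLe_mem {v | col v = k} hk i
  have col_eq (t : α) : col t = col (column 2) :=
    h.col_eq_of_three_in_column (w := column 0) (v := column 1)
      (column.strictMono (by decide)) (column.strictMono (by decide))
      (by simp only [col_column]) (by simp only [col_column]) t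
  let vertex : Fin 4 ↪o α := Finset.orderEmbOfCardLe Finset.univ hcard
  have col_vertex (i j : Fin 4) : col (vertex i) = col (vertex j) :=
    (col_eq _).trans (col_eq _).symm
  exact h.not_four_in_column (w := vertex 0) (v := vertex 1) (u := vertex 2) (t := vertex 3)
    (vertex.strictMono (by decide)) (vertex.strictMono (by decide))
    (vertex.strictMono (by decide)) (col_vertex _ _) (col_vertex _ _) (col_vertex _ _)

theorem card_le_three (h : HasAllTriangles col red) : Fintype.card α ≤ 3 := by
  by_contra! hcard
  obtain ⟨u, v, huv, hvu⟩ : ∃ u v, col u = col v ∧ v < u := by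
    obtain ⟨x, y, hne, hxy⟩ := Fintype.exists_ne_map_eq_of_card_lt col (by simpa using hcard)
    rcases hne.lt_or_gt with hlt | hlt
    · exact ⟨y, x, hxy.symm, hlt⟩
    · exact ⟨x, y, hxy, hlt⟩
  have two_le_card_others : 2 ≤ Finset.card {t | col t ≠ col u} := by
    have column_le := h.card_column_le_two hcard (col u)
    have card_add := Finset.card_filter_add_card_filter_not (s := Finset.univ) (col · = col u)
    rw [Finset.card_univ] at card_add
    lia
  let other : Fin 2 ↪o α := Finset.orderEmbOfCardLe {t | col t ≠ col u} two_le_card_others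
  have other_ne (i : Fin 2) : col (other i) ≠ col u := by
    simpa using Finset.orderEmbOfCardLe_mem {t | col t ≠ col u} two_le_card_others i
  have col_other (i : Fin 2) : col (other i) = facingColumn col red u :=
    h.col_eq_facingColumn hvu huv (other_ne i)
  exact other_ne 1 (h.col_eq_of_two_pairs hvu (other.strictMono (by decide : (0 : Fin 2) < 1)) huv
    ((col_other 1).trans (col_other 0).symm)).symm

end HasAllTriangles

theorem construction1_no_four_face_general {α : Type*} (col : α → Fin 3) (red : α → Bool)
    (a b c d : α) :
    MissingTriple col red d c b ∨ MissingTriple col red d c a ∨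
      MissingTriple col red d b a ∨ MissingTriple col red c b a := by
  by_contra! ⟨hdcb, hdca, hdba, hcba⟩
  let vertex : Fin 4 → α := ![a, b, c, d]
  have all_triangles : HasAllTriangles (col ∘ vertex) (red ∘ vertex) := by
    intro x y z hzy hyx
    fin_cases x <;> fin_cases y <;> fin_cases z <;> first | assumption | simp at hzy hyx
  exact absurd all_triangles.card_le_three (by simp)

/-- In any complex of Construction 1, any four vertices contain three that do not form
a triangle: for any `a < b < c < d`, at least one of the four triples is a missing
triangle.  Hence the complex has no face on four vertices and satisfies the hypotheses
of Turán's (3,4)-problem. -/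
theorem construction1_no_four_face {n : ℕ}
    (col : Fin n → Fin 3) (red : Fin n → Bool) (a b c d : Fin n)
    (hab : a < b) (hbc : b < c) (hcd : c < d) :
    MissingTriple col red d c b ∨ MissingTriple col red d c a ∨
      MissingTriple col red d b a ∨ MissingTriple col red c b a := by
  exact construction1_no_four_face_general col red a b c d
end

section
/- For n = 3k+1 or n = 3k+2 with k ≥ 1, the number of non-isomorphic two-dimensional simplicial complexes on n vertices, having all minimal non-faces on 3 vertices and no faces on 4 vertices, that attain the bound of Turán's (3,4)-conjecture is at least (1/2)·6^(k−1) (for n = 3k+1) respectively 6^(k−1) (for n = 3k+2). -/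
/-- A two-dimensional complex on `Fin n`, all of whose minimal non-faces have 3
vertices and which has no face on 4 vertices, is determined by its set `T` of triangles
(all singletons and all pairs are faces); the conditions amount to requiring that every
4-element vertex set contains a 3-subset that is not a triangle. -/
def ValidTriangleFamily (n : ℕ) (T : Finset (Finset (Fin n))) : Prop :=
  (∀ t ∈ T, t.card = 3) ∧
    ∀ s : Finset (Fin n), s.card = 4 → ∃ t ⊆ s, t.card = 3 ∧ t ∉ T

/-- Two such complexes are isomorphic if a permutation of the vertices carries the
triangles of one bijectively onto the triangles of the other. -/
def IsoTriangleFamily (n : ℕ) (T₁ T₂ : Finset (Finset (Fin n))) : Prop :=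
  ∃ σ : Equiv.Perm (Fin n), ∀ t : Finset (Fin n), t ∈ T₁ ↔ t.image σ ∈ T₂

/-- The bound of Turán's (3,4)-conjecture, with `k = ⌊n/3⌋`. -/
def turanBound (n : ℕ) : ℚ :=
  let k : ℚ := (n / 3 : ℕ)
  if n % 3 = 0 then 5 / 2 * k ^ 3 - 3 / 2 * k ^ 2
  else if n % 3 = 1 then 5 / 2 * k ^ 3 + k ^ 2 - 1 / 2 * k
  else 5 / 2 * k ^ 3 + 7 / 2 * k ^ 2 + k

/-!
Distribute the vertices over three columns and orient the pairs of vertices from different columns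
without alternating `4`-cycles between two columns. The triples that are not contained in a column
and in which no vertex dominates the other two form a complex without faces on `4` vertices.

A top row consists of three vertices, the `i`-th of which loses exactly to the vertices of column
`i` below. Adding one to a tournament with balanced columns preserves attainment of the Turán bound,
whatever the columns of the three new vertices, and six choices of the new row keep the columns
balanced when their sizes are not all equal.

Conversely, the complex remembers the tournament below the top row. If two tournaments with top rows
have the same triangles but their rows differ, then some vertex of the second row is a twin, in the
complex, of some vertex of the first. Exchanging twins turns any isomorphism of complexes into one
that matches the top rows, and the triangles meeting the top row in one or two vertices then
determine the columns and arcs below it. A similar exchange shows that adding two different rows to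
members of a family of tournaments without unexpected isomorphisms creates no new isomorphisms, so
every row multiplies the number of isomorphism classes by six. The very last row is added only to
read off the tournament below it from the complex.
-/

namespace TuranExtremal

open scoped Finset

/-! ### Triple systems -/

theorem eq_perm_of_triple_eq {V : Type*} [DecidableEq V] {a b c x y z : V} (hxy : x ≠ y)
    (hxz : x ≠ z) (hyz : y ≠ z) (h : ({a, b, c} : Finset V) = {x, y, z}) :
    (a, b, c) ∈ ({(x, y, z), (x, z, y), (y, x, z), (y, z, x), (z, x, y), (z, y, x)} :
      Finset (V × V × V)) := by
  have hx : x ∈ ({a, b, c} : Finset V) := by simp [h]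
  have hy : y ∈ ({a, b, c} : Finset V) := by simp [h]
  have hz : z ∈ ({a, b, c} : Finset V) := by simp [h]
  simp only [Finset.mem_insert, Finset.mem_singleton, Prod.mk.injEq] at hx hy hz ⊢
  clear h
  grind

/-- A `3`-uniform hypergraph on `V`, encoded by its symmetric ternary adjacency relation. It plays
the role of a two-dimensional complex with a complete `1`-skeleton. -/
@[ext]
structure TripleSystem (V : Type*) where
  Adj : V → V → V → Prop
  swap : ∀ {x y z}, Adj x y z → Adj y x z
  rotate : ∀ {x y z}, Adj x y z → Adj y z x
  ne : ∀ {x y z}, Adj x y z → x ≠ y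

namespace TripleSystem

variable {V W : Type*} {H : TripleSystem V} {K : TripleSystem W} {x y z : V}

theorem ne_right (h : H.Adj x y z) : y ≠ z := H.ne (H.rotate h)

theorem ne_outer (h : H.Adj x y z) : x ≠ z := (H.ne (H.rotate (H.rotate h))).symm

theorem adj_swap : H.Adj x y z ↔ H.Adj y x z := ⟨H.swap, H.swap⟩

theorem adj_rotate : H.Adj x y z ↔ H.Adj y z x := ⟨H.rotate, fun h ↦ H.rotate (H.rotate h)⟩

theorem adj_swap_right : H.Adj x y z ↔ H.Adj x z y := adj_rotate.trans (adj_rotate.trans adj_swap)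

/-- Isomorphisms of triple systems. -/
structure Iso (H : TripleSystem V) (K : TripleSystem W) extends V ≃ W where
  adj_iff : ∀ x y z, K.Adj (toFun x) (toFun y) (toFun z) ↔ H.Adj x y z

namespace Iso

variable {U : Type*} {L : TripleSystem U}

/-- The inverse isomorphism. -/
def symm (e : H.Iso K) : K.Iso H where
  toEquiv := e.toEquiv.symm
  adj_iff x y z := by
    simpa using (e.adj_iff (e.toEquiv.symm x) (e.toEquiv.symm y) (e.toEquiv.symm z)).symm

/-- Composition of isomorphisms. -/
def trans (e : H.Iso K) (f : K.Iso L) : H.Iso L where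
  toEquiv := e.toEquiv.trans f.toEquiv
  adj_iff x y z := (f.adj_iff _ _ _).trans (e.adj_iff x y z)

end Iso

/-- The image of a triple system under a bijection of the vertex set. -/
def map (H : TripleSystem V) (e : V ≃ W) : TripleSystem W where
  Adj x y z := H.Adj (e.symm x) (e.symm y) (e.symm z)
  swap := H.swap
  rotate := H.rotate
  ne h := fun hxy ↦ H.ne h (congrArg e.symm hxy)

/-- A bijection as an isomorphism onto the image it defines. -/
def isoMap (H : TripleSystem V) (e : V ≃ W) : H.Iso (H.map e) where
  toEquiv := e
  adj_iff x y z := by simp [map]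

/-- Two vertices with the same link away from the pair. -/
def IsTwin (H : TripleSystem V) (u v : V) : Prop :=
  ∀ x y, x ≠ u → x ≠ v → y ≠ u → y ≠ v → (H.Adj u x y ↔ H.Adj v x y)

/-- Exchanging two twins is an automorphism. -/
def IsTwin.swapIso [DecidableEq V] {u v : V} (h : H.IsTwin u v) : H.Iso H where
  toEquiv := Equiv.swap u v
  adj_iff x y z := by
    have swap_eq (a : V) : Equiv.swap u v a = if a = u then v else if a = v then u else a :=
      Equiv.swap_apply_def u v a
    simp only [Equiv.toFun_as_coe, swap_eq]
    have h₁ := @H.swap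
    have h₂ := @H.rotate
    have h₃ := @H.ne
    unfold IsTwin at h
    grind

open scoped Classical in
/-- The number of ordered triples forming an edge. -/
noncomputable def tripleCount (H : TripleSystem V) [Fintype V] : ℕ :=
  Fintype.card {p : V × V × V // H.Adj p.1 p.2.1 p.2.2}

theorem Iso.tripleCount_eq [Fintype V] [Fintype W] (e : H.Iso K) :
    H.tripleCount = K.tripleCount := by
  classical
  exact Fintype.card_congr <| (e.toEquiv.prodCongr (e.toEquiv.prodCongr e.toEquiv)).subtypeEquiv
    fun p ↦ (e.adj_iff p.1 p.2.1 p.2.2).symm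

open scoped Classical in
theorem tripleCount_eq_sum [Fintype V] :
    H.tripleCount = ∑ x, ∑ y, ∑ z, if H.Adj x y z then 1 else 0 := by
  rw [tripleCount, Fintype.card_subtype, Finset.card_filter, Fintype.sum_prod_type]
  simp only [Fintype.sum_prod_type]

section Faces

variable [Fintype V] [DecidableEq V]

open scoped Classical in
/-- The set of edges of a triple system, as three-element sets. -/
noncomputable def faces (H : TripleSystem V) : Finset (Finset V) :=
  {t | ∃ x y z, H.Adj x y z ∧ t = {x, y, z}}

theorem mem_faces {t : Finset V} : t ∈ H.faces ↔ ∃ x y z, H.Adj x y z ∧ t = {x, y, z} := by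
  simp [faces]

theorem triple_mem_faces : ({x, y, z} : Finset V) ∈ H.faces ↔ H.Adj x y z := by
  refine ⟨fun h ↦ ?_, fun h ↦ mem_faces.2 ⟨x, y, z, h, rfl⟩⟩
  obtain ⟨a, b, c, habc, h⟩ := mem_faces.1 h
  have hperm := eq_perm_of_triple_eq (H.ne habc) (ne_outer habc) (ne_right habc) h
  have h₁ := @H.swap
  have h₂ := @H.rotate
  simp only [Finset.mem_insert, Finset.mem_singleton, Prod.mk.injEq] at hperm
  grind

theorem card_of_mem_faces {t : Finset V} (ht : t ∈ H.faces) : t.card = 3 := by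
  obtain ⟨x, y, z, h, rfl⟩ := mem_faces.1 ht
  exact Finset.card_eq_three.2 ⟨x, y, z, H.ne h, ne_outer h, ne_right h, rfl⟩

open scoped Classical in
theorem card_orderings_of_mem_faces {t : Finset V} (ht : t ∈ H.faces) :
    #{p : V × V × V | H.Adj p.1 p.2.1 p.2.2 ∧ ({p.1, p.2.1, p.2.2} : Finset V) = t} = 6 := by
  obtain ⟨x, y, z, h, rfl⟩ := mem_faces.1 ht
  have hxy := H.ne h
  have hxz := ne_outer h
  have hyz := ne_right h
  have orderings : ({p : V × V × V | H.Adj p.1 p.2.1 p.2.2 ∧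
      ({p.1, p.2.1, p.2.2} : Finset V) = {x, y, z}} : Finset (V × V × V)) =
        {(x, y, z), (x, z, y), (y, x, z), (y, z, x), (z, x, y), (z, y, x)} := by
    ext ⟨a, b, c⟩
    simp only [Finset.mem_filter_univ]
    refine ⟨fun hp ↦ eq_perm_of_triple_eq hxy hxz hyz hp.2, fun hp ↦ ?_⟩
    suffices ({a, b, c} : Finset V) = {x, y, z} from
      ⟨triple_mem_faces.1 (this ▸ triple_mem_faces.2 h), this⟩
    simp only [Finset.mem_insert, Finset.mem_singleton, Prod.mk.injEq] at hp
    grind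
  rw [orderings]
  grind

theorem tripleCount_eq_six_mul_card_faces : H.tripleCount = 6 * #H.faces := by
  classical
  rw [tripleCount, Fintype.card_subtype, Finset.card_eq_sum_card_fiberwise (t := H.faces)
    (f := fun p ↦ {p.1, p.2.1, p.2.2})]
  · simp_rw [Finset.filter_filter]
    rw [Finset.sum_congr rfl fun t ht ↦ card_orderings_of_mem_faces ht, Finset.sum_const,
      smul_eq_mul, mul_comm]
  · intro p hp
    exact triple_mem_faces.2 (by simpa using hp)

end Faces

theorem validTriangleFamily_faces {n : ℕ} {H : TripleSystem (Fin n)}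
    (no_tetrahedron : ∀ a b c d, H.Adj a b c → H.Adj a b d → H.Adj a c d → ¬ H.Adj b c d) :
    ValidTriangleFamily n H.faces := by
  refine ⟨fun t ht ↦ card_of_mem_faces ht, fun s hs ↦ ?_⟩
  obtain ⟨a, t, hat, rfl, ht⟩ := Finset.card_eq_succ.1 hs
  obtain ⟨b, c, d, hbc, hbd, hcd, rfl⟩ := Finset.card_eq_three.1 ht
  simp only [Finset.mem_insert, Finset.mem_singleton, not_or] at hat
  obtain ⟨hab, hac, had⟩ := hat
  by_contra! all_faces
  have adj {x y z : Fin n} (hsub : ({x, y, z} : Finset (Fin n)) ⊆ insert a {b, c, d})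
      (hxy : x ≠ y) (hxz : x ≠ z) (hyz : y ≠ z) : H.Adj x y z :=
    triple_mem_faces.1 (all_faces _ hsub (Finset.card_eq_three.2 ⟨x, y, z, hxy, hxz, hyz, rfl⟩))
  exact no_tetrahedron a b c d (adj (by grind) hab hac hbc) (adj (by grind) hab had hbd)
    (adj (by grind) hac had hcd) (adj (by grind) hbc hbd hcd)

theorem nonempty_iso_of_isoTriangleFamily {n : ℕ} {H K : TripleSystem (Fin n)}
    (h : IsoTriangleFamily n H.faces K.faces) : Nonempty (H.Iso K) := by
  obtain ⟨σ, hσ⟩ := h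
  refine ⟨⟨σ, fun x y z ↦ ?_⟩⟩
  have := hσ {x, y, z}
  rw [triple_mem_faces, Finset.image_insert, Finset.image_insert, Finset.image_singleton,
    triple_mem_faces] at this
  exact this.symm

end TripleSystem

/-! ### Column tournaments -/

theorem eq_or_eq_or_eq_of_ne {i j l : Fin 3} (hij : i ≠ j) (hil : i ≠ l) (hjl : j ≠ l) (m : Fin 3) :
    m = i ∨ m = j ∨ m = l := by
  omega

theorem exists_ne_and_ne (i : Fin 3) : ∃ j l, i ≠ j ∧ i ≠ l ∧ j ≠ l := by
  decide +revert

/-- A vertex set split into three columns, with an orientation of all pairs of vertices in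
different columns that has no directed `4`-cycle alternating between two columns. The value of
`arc` within a column is irrelevant and fixed to `false`. -/
structure ColumnTournament (V : Type*) where
  col : V → Fin 3
  arc : V → V → Bool
  arc_of_col_eq : ∀ {x y}, col x = col y → arc x y = false
  arc_of_col_ne : ∀ {x y}, col x ≠ col y → arc x y = !arc y x
  no_four_cycle : ∀ {x x' y y'}, col x = col x' → col y = col y' →
    arc x y → arc y x' → arc x' y' → ¬ arc y' x

namespace ColumnTournament

variable {V W U : Type*} {F : ColumnTournament V} {G : ColumnTournament W} {x y z : V}

theorem col_ne_of_arc (h : F.arc x y) : F.col x ≠ F.col y :=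
  fun hc ↦ by simp [F.arc_of_col_eq hc] at h

theorem not_arc_of_arc (h : F.arc x y) : ¬ F.arc y x := by
  have := F.arc_of_col_ne (col_ne_of_arc h)
  simp_all

theorem arc_of_not_arc (hc : F.col x ≠ F.col y) (h : ¬ F.arc y x) : F.arc x y := by
  have := F.arc_of_col_ne hc
  simp_all

/-- The triples of distinct vertices, not all in one column, none of which dominates the other
two. -/
def triangles (F : ColumnTournament V) : TripleSystem V where
  Adj x y z := (x ≠ y ∧ x ≠ z ∧ y ≠ z) ∧ ¬ (F.col x = F.col y ∧ F.col y = F.col z) ∧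
    ¬ (F.arc x y ∧ F.arc x z) ∧ ¬ (F.arc y x ∧ F.arc y z) ∧ ¬ (F.arc z x ∧ F.arc z y)
  swap := by grind
  rotate := by grind
  ne h := h.1.1

theorem adj_triangles : F.triangles.Adj x y z ↔
    (x ≠ y ∧ x ≠ z ∧ y ≠ z) ∧ ¬ (F.col x = F.col y ∧ F.col y = F.col z) ∧
    ¬ (F.arc x y ∧ F.arc x z) ∧ ¬ (F.arc y x ∧ F.arc y z) ∧ ¬ (F.arc z x ∧ F.arc z y) :=
  Iff.rfl

theorem no_tetrahedron (F : ColumnTournament V) (a b c d : V) (habc : F.triangles.Adj a b c)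
    (habd : F.triangles.Adj a b d) (hacd : F.triangles.Adj a c d) : ¬ F.triangles.Adj b c d := by
  intro hbcd
  rw [adj_triangles] at *
  have h₁ := F.arc_of_col_ne (x := a) (y := b)
  have h₂ := F.arc_of_col_ne (x := a) (y := c)
  have h₃ := F.arc_of_col_ne (x := a) (y := d)
  have h₄ := F.arc_of_col_ne (x := b) (y := c)
  have h₅ := F.arc_of_col_ne (x := b) (y := d)
  have h₆ := F.arc_of_col_ne (x := c) (y := d)
  have := @F.no_four_cycle
  -- Three vertices in one column are not a triangle, two and two would form an alternating
  -- `4`-cycle, and with two, one and one, a single vertex dominates the pair.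
  grind

/-- Isomorphisms of column tournaments that permute the columns by `π`. -/
structure Iso (F : ColumnTournament V) (G : ColumnTournament W) (π : Equiv.Perm (Fin 3)) extends
    V ≃ W where
  col_apply : ∀ x, G.col (toFun x) = π (F.col x)
  arc_apply : ∀ x y, G.arc (toFun x) (toFun y) = F.arc x y

namespace Iso

variable {π ϖ : Equiv.Perm (Fin 3)} {L : ColumnTournament U}

/-- The inverse isomorphism. -/
def symm (e : F.Iso G π) : G.Iso F π.symm where
  toEquiv := e.toEquiv.symm
  col_apply x := π.eq_symm_apply.2 <| by simpa using (e.col_apply (e.toEquiv.symm x)).symm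
  arc_apply x y := by simpa using (e.arc_apply (e.toEquiv.symm x) (e.toEquiv.symm y)).symm

/-- Composition of isomorphisms. -/
def trans (e : F.Iso G π) (f : G.Iso L ϖ) : F.Iso L (π.trans ϖ) where
  toEquiv := e.toEquiv.trans f.toEquiv
  col_apply x := (f.col_apply _).trans (congrArg ϖ (e.col_apply x))
  arc_apply x y := (f.arc_apply _ _).trans (e.arc_apply x y)

/-- The isomorphism induced on triangles. -/
def triangles (e : F.Iso G π) : F.triangles.Iso G.triangles where
  toEquiv := e.toEquiv
  adj_iff x y z := by
    simp only [adj_triangles, e.col_apply, e.arc_apply, e.left_inv.injective.ne_iff,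
      π.injective.eq_iff]

end Iso

/-- The column tournament obtained by renaming the vertices along `e` and the columns along
`π`. -/
def transport (F : ColumnTournament V) (e : V ≃ W) (π : Equiv.Perm (Fin 3)) :
    ColumnTournament W where
  col x := π (F.col (e.symm x))
  arc x y := F.arc (e.symm x) (e.symm y)
  arc_of_col_eq h := F.arc_of_col_eq (π.injective h)
  arc_of_col_ne h := F.arc_of_col_ne fun h' ↦ h (congrArg π h')
  no_four_cycle hx hy := F.no_four_cycle (π.injective hx) (π.injective hy)

/-- The vertex bijection as an isomorphism. -/
def isoTransport (F : ColumnTournament V) (e : V ≃ W) (π : Equiv.Perm (Fin 3)) :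
    F.Iso (F.transport e π) π where
  toEquiv := e
  col_apply x := by simp [transport]
  arc_apply x y := by simp [transport]

/-- Among the vertices of `s` outside its own column, `w` loses exactly to those of column `i`. -/
def LosesOnlyTo (F : ColumnTournament V) (s : Set V) (i : Fin 3) (w : V) : Prop :=
  F.col w ≠ i ∧ ∀ x ∈ s, F.col x ≠ F.col w → (F.arc x w ↔ F.col x = i)

namespace LosesOnlyTo

variable {s : Set V} {i : Fin 3} {w w' : V}

theorem arc_to (h : F.LosesOnlyTo s i w) (hx : x ∈ s) (hc : F.col x = i) : F.arc x w :=
  (h.2 x hx fun h' ↦ h.1 (h'.symm.trans hc)).2 hc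

theorem col_eq_of_arc (h : F.LosesOnlyTo s i w) (hx : x ∈ s) (harc : F.arc x w) : F.col x = i :=
  (h.2 x hx (col_ne_of_arc harc)).1 harc

theorem arc_from (h : F.LosesOnlyTo s i w) (hx : x ∈ s) (hi : F.col x ≠ i)
    (hc : F.col w ≠ F.col x) : F.arc w x :=
  arc_of_not_arc hc fun h' ↦ hi (h.col_eq_of_arc hx h')

theorem adj_iff_of_col_eq (h : F.LosesOnlyTo s i w) (hx : x ∈ s) (hy : y ∈ s) (hwx : w ≠ x)
    (hwy : w ≠ y) (hxy : x ≠ y) (hc : F.col x = F.col y) :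
    F.triangles.Adj w x y ↔ F.col x = i := by
  refine ⟨fun ⟨_, not_monochromatic, not_dom, _⟩ ↦ ?_, fun hi ↦ ?_⟩
  · by_contra hi
    have hne : F.col w ≠ F.col x := fun h' ↦ not_monochromatic ⟨h', hc⟩
    exact not_dom ⟨h.arc_from hx hi hne, h.arc_from hy (hc ▸ hi) (hc ▸ hne)⟩
  · exact ⟨⟨hwx, hwy, hxy⟩, fun h' ↦ h.1 (h'.1.trans hi),
      fun h' ↦ not_arc_of_arc (h.arc_to hx hi) h'.1,
      fun h' ↦ col_ne_of_arc h'.2 hc, fun h' ↦ col_ne_of_arc h'.2 hc.symm⟩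

theorem adj_of_col_ne (h : F.LosesOnlyTo s i w) (hx : x ∈ s) (hy : y ∈ s) (hwx : w ≠ x)
    (hwy : w ≠ y) (hc : F.col x ≠ F.col y) (hxi : F.col x ≠ i) (hyi : F.col y ≠ i) :
    F.triangles.Adj w x y := by
  refine ⟨⟨hwx, hwy, ne_of_apply_ne F.col hc⟩, fun h' ↦ hc h'.2, fun h' ↦ ?_,
    fun h' ↦ hxi (h.col_eq_of_arc hx h'.1), fun h' ↦ hyi (h.col_eq_of_arc hy h'.1)⟩
  have := h.1
  have := col_ne_of_arc h'.1
  have := col_ne_of_arc h'.2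
  omega

theorem adj_iff_arc (h : F.LosesOnlyTo s i w) (hx : x ∈ s) (hy : y ∈ s) (hwy : w ≠ y)
    (hxi : F.col x = i) (hyi : F.col y ≠ i) : F.triangles.Adj w x y ↔ F.arc y x := by
  have hxw : F.arc x w := h.arc_to hx hxi
  have hc : F.col y ≠ F.col x := hxi ▸ hyi
  have hyw : ¬ F.arc y w := fun h' ↦ hyi (h.col_eq_of_arc hy h')
  refine ⟨fun ⟨_, _, _, not_dom, _⟩ ↦ arc_of_not_arc hc fun h' ↦ not_dom ⟨hxw, h'⟩, fun hyx ↦ ?_⟩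
  exact ⟨⟨(ne_of_apply_ne F.col (col_ne_of_arc hxw)).symm, hwy, ne_of_apply_ne F.col hc.symm⟩,
    fun h' ↦ hc h'.2.symm,
    fun h' ↦ not_arc_of_arc hxw h'.1, fun h' ↦ not_arc_of_arc hyx h'.2, fun h' ↦ hyw h'.1⟩

theorem adj_congr (h : F.LosesOnlyTo s i w) (h' : F.LosesOnlyTo s i w') (hx : x ∈ s) (hy : y ∈ s)
    (hwx : w ≠ x) (hwy : w ≠ y) (hwx' : w' ≠ x) (hwy' : w' ≠ y) :
    F.triangles.Adj w x y ↔ F.triangles.Adj w' x y := by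
  rcases eq_or_ne x y with rfl | hxy
  · exact iff_of_false (fun hadj ↦ TripleSystem.ne_right hadj rfl)
      (fun hadj ↦ TripleSystem.ne_right hadj rfl)
  by_cases hc : F.col x = F.col y
  · rw [h.adj_iff_of_col_eq hx hy hwx hwy hxy hc, h'.adj_iff_of_col_eq hx hy hwx' hwy' hxy hc]
  by_cases hxi : F.col x = i
  · have hyi : F.col y ≠ i := fun hyi ↦ hc (hxi.trans hyi.symm)
    rw [h.adj_iff_arc hx hy hwy hxi hyi, h'.adj_iff_arc hx hy hwy' hxi hyi]
  by_cases hyi : F.col y = i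
  · rw [TripleSystem.adj_swap_right, h.adj_iff_arc hy hx hwx hyi hxi,
      TripleSystem.adj_swap_right, h'.adj_iff_arc hy hx hwx' hyi hxi]
  · exact iff_of_true (h.adj_of_col_ne hx hy hwx hwy hc hxi hyi)
      (h'.adj_of_col_ne hx hy hwx' hwy' hc hxi hyi)

end LosesOnlyTo

/-- Three distinguished vertices `b 0, b 1, b 2` such that `b i` loses exactly to column `i` of the
remaining vertices. Within the row, `b i` beats only the vertex indexed by the column of `b i`; two
vertices lying in each other's columns are oriented arbitrarily. -/
structure IsTopRow (F : ColumnTournament V) (b : Fin 3 → V) : Prop where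
  injective : Function.Injective b
  loses : ∀ i, F.LosesOnlyTo (Set.range b)ᶜ i (b i)
  arc_row : ∀ {i j}, F.col (b i) = j → F.col (b j) ≠ i → F.col (b i) ≠ F.col (b j) →
    F.arc (b i) (b j)

namespace IsTopRow

variable {a : Fin 3 → V} {i j l : Fin 3}

theorem col_ne (h : F.IsTopRow a) (i : Fin 3) : F.col (a i) ≠ i := (h.loses i).1

theorem ne_apply (hx : x ∉ Set.range a) (i : Fin 3) : a i ≠ x := fun h ↦ hx ⟨i, h⟩

theorem col_eq_of_arc_row (h : F.IsTopRow a) (harc : F.arc (a i) (a j)) : F.col (a i) = j := by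
  by_contra hij
  have hne := col_ne_of_arc harc
  have hji : F.col (a j) = i := by
    have : i ≠ j := fun h' ↦ hne (congrArg (F.col ∘ a) h')
    have := h.col_ne i
    have := h.col_ne j
    omega
  exact not_arc_of_arc harc (h.arc_row hji hij hne.symm)

theorem adj_row (h : F.IsTopRow a) (hij : i ≠ j) (hil : i ≠ l) (hjl : j ≠ l) :
    F.triangles.Adj (a i) (a j) (a l) := by
  have not_dominating {p q r : Fin 3} (hqr : q ≠ r) :
      ¬ (F.arc (a p) (a q) ∧ F.arc (a p) (a r)) :=
    fun ⟨hq, hr⟩ ↦ hqr ((h.col_eq_of_arc_row hq).symm.trans (h.col_eq_of_arc_row hr))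
  refine ⟨⟨h.injective.ne hij, h.injective.ne hil, h.injective.ne hjl⟩, fun _ ↦ ?_,
    not_dominating hjl, not_dominating hil, not_dominating hij⟩
  have := h.col_ne i
  have := h.col_ne j
  have := h.col_ne l
  omega

theorem adj_pair_of_col_eq (h : F.IsTopRow a) (hx : x ∉ Set.range a) (hij : i ≠ j)
    (hc : F.col x = i) : F.triangles.Adj (a i) (a j) x := by
  have hxi : F.arc x (a i) := (h.loses i).arc_to hx hc
  refine ⟨⟨h.injective.ne hij, ne_apply hx i, ne_apply hx j⟩, fun ⟨h₁, h₂⟩ ↦ ?_,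
    fun h' ↦ not_arc_of_arc hxi h'.2, fun h' ↦ ?_, fun h' ↦ ?_⟩
  · exact col_ne_of_arc hxi (h₁.trans h₂).symm
  · exact col_ne_of_arc h'.2 ((h.col_eq_of_arc_row h'.1).trans hc.symm)
  · exact hij (hc.symm.trans ((h.loses j).col_eq_of_arc hx h'.2))

theorem not_adj_pair_of_col_ne (h : F.IsTopRow a) (hx : x ∉ Set.range a) (hij : i ≠ j)
    (hi : F.col x ≠ i) (hj : F.col x ≠ j) : ¬ F.triangles.Adj (a i) (a j) x := by
  rintro ⟨-, not_monochromatic, not_dom_i, not_dom_j, -⟩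
  have arc_x {p : Fin 3} (hp : F.col x ≠ p) (hpx : F.col (a p) ≠ F.col x) : F.arc (a p) x :=
    (h.loses p).arc_from hx hp hpx
  have hai := h.col_ne i
  have haj := h.col_ne j
  by_cases hix : F.col (a i) = F.col x
  · have hjx : F.col (a j) ≠ F.col x := fun hjx ↦ not_monochromatic ⟨hix.trans hjx.symm, hjx⟩
    have hji : F.col (a j) = i := by omega
    exact not_dom_j ⟨h.arc_row hji (by omega) (by omega), arc_x hj hjx⟩
  have hij' : F.col (a i) = j := by omega
  by_cases hjx : F.col (a j) = F.col x
  · exact not_dom_i ⟨h.arc_row hij' (by omega) (by omega), arc_x hi hix⟩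
  by_cases harc : F.arc (a i) (a j)
  · exact not_dom_i ⟨harc, arc_x hi hix⟩
  · exact not_dom_j ⟨arc_of_not_arc (by omega) harc, arc_x hj hjx⟩

theorem adj_pair_iff (h : F.IsTopRow a) (hx : x ∉ Set.range a) (hij : i ≠ j) :
    F.triangles.Adj (a i) (a j) x ↔ F.col x = i ∨ F.col x = j := by
  refine ⟨fun hadj ↦ ?_, ?_⟩
  · by_contra! hc
    exact h.not_adj_pair_of_col_ne hx hij hc.1 hc.2 hadj
  · rintro (hc | hc)
    · exact h.adj_pair_of_col_eq hx hij hc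
    · exact TripleSystem.adj_swap.1 (h.adj_pair_of_col_eq hx hij.symm hc)

theorem adj_iff_of_col_eq (h : F.IsTopRow a) (hx : x ∉ Set.range a) (hy : y ∉ Set.range a)
    (hxy : x ≠ y) (hc : F.col x = F.col y) : F.triangles.Adj (a i) x y ↔ F.col x = i :=
  (h.loses i).adj_iff_of_col_eq hx hy (ne_apply hx i) (ne_apply hy i) hxy hc

theorem adj_of_col_ne (h : F.IsTopRow a) (hx : x ∉ Set.range a) (hy : y ∉ Set.range a)
    (hc : F.col x ≠ F.col y) (hxi : F.col x ≠ i) (hyi : F.col y ≠ i) :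
    F.triangles.Adj (a i) x y :=
  (h.loses i).adj_of_col_ne hx hy (ne_apply hx i) (ne_apply hy i) hc hxi hyi

theorem adj_iff_arc (h : F.IsTopRow a) (hx : x ∉ Set.range a) (hy : y ∉ Set.range a)
    (hxi : F.col x = i) (hyi : F.col y ≠ i) : F.triangles.Adj (a i) x y ↔ F.arc y x :=
  (h.loses i).adj_iff_arc hx hy (ne_apply hy i) hxi hyi

end IsTopRow

end ColumnTournament

/-! ### Exchanging top rows -/

namespace ColumnTournament

namespace IsTopRow

open TripleSystem

section CommonTriangles

variable {V : Type*} {F G : ColumnTournament V} {a b : Fin 3 → V} {x y u : V}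
  {i j l m n p : Fin 3}

theorem col_eq_of_adj_of_adj (h : F.IsTopRow a) (hx : x ∉ Set.range a) (hij : i ≠ j) (hil : i ≠ l)
    (hjl : j ≠ l) (hadj : F.triangles.Adj (a i) (a j) x) (hadj' : F.triangles.Adj (a i) (a l) x) :
    F.col x = i := by
  rw [h.adj_pair_iff hx hij] at hadj
  rw [h.adj_pair_iff hx hil] at hadj'
  grind

theorem col_eq_of_not_adj (h : F.IsTopRow a) (hx : x ∉ Set.range a) (hij : i ≠ j) (hil : i ≠ l)
    (hjl : j ≠ l) (hadj : ¬ F.triangles.Adj (a i) (a j) x) : F.col x = l := by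
  rw [h.adj_pair_iff hx hij] at hadj
  omega

theorem adj_pair_iff_of_losesOnlyTo (h : F.IsTopRow a) (hu : u ∉ Set.range a)
    (hul : F.LosesOnlyTo (Set.range a)ᶜ l u) (hlj : l ≠ j) (hx : x ∉ Set.range a) (hxu : x ≠ u) :
    F.triangles.Adj u (a j) x ↔ F.triangles.Adj (a l) (a j) x := by
  rw [h.adj_pair_iff hx hlj, adj_swap]
  have hlu := hul.1
  by_cases huj : F.col u = j
  · by_cases hxj : F.col x = j
    · simp [h.adj_iff_of_col_eq hu hx hxu.symm (huj.trans hxj.symm), huj, hxj]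
    · rw [h.adj_iff_arc hu hx huj hxj, hul.2 x hx (huj ▸ hxj)]
      simp [hxj]
  by_cases hxu' : F.col u = F.col x
  · rw [h.adj_iff_of_col_eq hu hx hxu.symm hxu']
    exact iff_of_false huj (by omega)
  by_cases hxj : F.col x = j
  · rw [adj_swap_right, h.adj_iff_arc hx hu hxj huj]
    exact iff_of_true (hul.arc_from hx (by omega) hxu') (Or.inr hxj)
  · exact iff_of_true (h.adj_of_col_ne hu hx hxu' huj hxj) (by omega)

theorem isTwin_of_losesOnlyTo (h : F.IsTopRow a) (hu : u ∉ Set.range a)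
    (hul : F.LosesOnlyTo (Set.range a)ᶜ l u) : F.triangles.IsTwin u (a l) := by
  intro x y hxu hxl hyu hyl
  by_cases hx : x ∈ Set.range a <;> by_cases hy : y ∈ Set.range a
  · obtain ⟨i, rfl⟩ := hx
    obtain ⟨j, rfl⟩ := hy
    have hil : i ≠ l := ne_of_apply_ne a hxl
    have hjl : j ≠ l := ne_of_apply_ne a hyl
    rcases eq_or_ne i j with rfl | hij
    · exact iff_of_false (fun hadj ↦ ne_right hadj rfl) (fun hadj ↦ ne_right hadj rfl)
    · refine iff_of_true (adj_rotate.2 ((h.adj_pair_iff hu hij).2 ?_))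
        (h.adj_row hil.symm hjl.symm hij)
      have := hul.1
      omega
  · obtain ⟨i, rfl⟩ := hx
    exact h.adj_pair_iff_of_losesOnlyTo hu hul (ne_of_apply_ne a hxl).symm hy hyu
  · obtain ⟨j, rfl⟩ := hy
    rw [adj_swap_right, h.adj_pair_iff_of_losesOnlyTo hu hul (ne_of_apply_ne a hyl).symm hx hxu,
      adj_swap_right]
  · exact hul.adj_congr (h.loses l) hx hy hxu.symm hyu.symm hxl.symm hyl.symm

theorem notMem_range_of_common (hmn : m ≠ n) (hmp : m ≠ p) (hnp : n ≠ p) (hm : b m = a i)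
    (hx : x ∉ Set.range a) (hxn : x ≠ b n) (hxp : x ≠ b p) : x ∉ Set.range b := by
  rintro ⟨q, rfl⟩
  rcases eq_or_eq_or_eq_of_ne hmn hmp hnp q with rfl | rfl | rfl
  exacts [hx ⟨i, hm.symm⟩, hxn rfl, hxp rfl]

theorem isTwin_of_two_common (hF : F.IsTopRow a) (hG : G.IsTopRow b)
    (hFG : F.triangles = G.triangles) (hij : i ≠ j) (hil : i ≠ l) (hjl : j ≠ l) (hmn : m ≠ n)
    (hmp : m ≠ p) (hnp : n ≠ p) (hi : b m = a i) (hj : b n = a j) (hu : b p ∉ Set.range a)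
    (hal : a l ∉ Set.range b) (hc : F.col (b p) = j) : F.triangles.IsTwin (b p) (a l) := by
  have notMem {x : V} (hx : x ∉ Set.range a) (hxu : x ≠ b p) : x ∉ Set.range b :=
    notMem_range_of_common hmn hmp hnp hi hx (fun h ↦ hx ⟨j, (h.trans hj).symm⟩) hxu
  have col_al : G.col (a l) = n := by
    refine hG.col_eq_of_adj_of_adj hal hmn.symm hnp hmp ?_ ?_ <;> rw [← hFG]
    · rw [hi, hj]
      exact hF.adj_row hij.symm hjl hil
    · rw [hj, adj_swap_right]
      exact (hF.adj_pair_iff hu hjl).2 (Or.inl hc)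
  refine hF.isTwin_of_losesOnlyTo hu ⟨hc ▸ hjl, fun x hx hxu ↦ ⟨fun harc ↦ ?_, fun hxl ↦ ?_⟩⟩
  · by_contra hxl
    have hxi : F.col x = i := by omega
    have hxb := notMem hx (ne_of_apply_ne F.col hxu)
    have col_x : G.col x = n := by
      refine hG.col_eq_of_adj_of_adj hxb hmn.symm hnp hmp ?_ ?_ <;> rw [← hFG]
      · rw [hi, hj]
        exact (hF.adj_pair_iff hx hij.symm).2 (Or.inr hxi)
      · rw [hj]
        exact (hF.adj_iff_arc hu hx hc (by omega)).2 harc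
    have hadj : F.triangles.Adj (a j) (a l) x := by
      rw [hFG, ← hj]
      exact (hG.adj_iff_of_col_eq hal hxb (ne_apply hx l) (col_al.trans col_x.symm)).2 col_al
    rw [hF.adj_pair_iff hx hjl] at hadj
    omega
  · have hxb := notMem hx (ne_of_apply_ne F.col hxu)
    have hnadj : ¬ F.triangles.Adj (a i) (a j) x := by
      rw [hF.adj_pair_iff hx hij]
      omega
    have hadj : F.triangles.Adj (a j) (b p) x := by
      rw [← hi, ← hj, hFG] at hnadj
      rw [← hj, hFG, hG.adj_pair_iff hxb hnp]
      exact Or.inr (hG.col_eq_of_not_adj hxb hmn hmp hnp hnadj)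
    exact (hF.adj_iff_arc hu hx hc (by omega)).1 hadj

theorem exists_isTwin_of_two_common (hF : F.IsTopRow a) (hG : G.IsTopRow b)
    (hFG : F.triangles = G.triangles) (hmn : m ≠ n) (hmp : m ≠ p) (hnp : n ≠ p) (hi : b m = a i)
    (hj : b n = a j) (hu : b p ∉ Set.range a) :
    ∃ l, a l ∉ Set.range b ∧ F.triangles.IsTwin (b p) (a l) := by
  have hij : i ≠ j := fun h ↦ hmn (hG.injective (by rw [hi, hj, h]))
  obtain ⟨l, hli, hlj⟩ := Fin.exists_ne_and_ne_of_two_lt i j (by norm_num)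
  have hal : a l ∉ Set.range b := by
    rintro ⟨q, hq⟩
    rcases eq_or_eq_or_eq_of_ne hmn hmp hnp q with rfl | rfl | rfl
    exacts [hli (hF.injective (hq.symm.trans hi)), hlj (hF.injective (hq.symm.trans hj)),
      hu ⟨l, hq.symm⟩]
  have hadj : F.triangles.Adj (a i) (a j) (b p) := by
    rw [hFG, ← hi, ← hj]
    exact hG.adj_row hmn hmp hnp
  rcases (hF.adj_pair_iff hu hij).1 hadj with hc | hc
  · exact ⟨l, hal, hF.isTwin_of_two_common hG hFG hij.symm hlj.symm hli.symm hmn.symm hnp hmp hj hi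
      hu hal hc⟩
  · exact ⟨l, hal, hF.isTwin_of_two_common hG hFG hij hli.symm hlj.symm hmn hmp hnp hi hj
      hu hal hc⟩

theorem col_col_of_one_common (hF : F.IsTopRow a) (hG : G.IsTopRow b)
    (hFG : F.triangles = G.triangles) (hmn : m ≠ n) (hmp : m ≠ p) (hnp : n ≠ p) (hm : b m = a i)
    (hn : b n ∉ Set.range a) (hp : b p ∉ Set.range a) (ha : ∀ j ≠ i, a j ∉ Set.range b)
    (hni : F.col (b n) ≠ i) (hpi : F.col (b p) ≠ i) : G.col (a (F.col (b n))) = n := by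
  generalize hc : F.col (b n) = c at hni
  have hadj : G.triangles.Adj (b m) (b n) (a c) := by
    rw [← hFG, hm, adj_swap_right, hF.adj_pair_iff hn hni.symm]
    exact Or.inr hc
  refine ((hG.adj_pair_iff (ha c hni) hmn).1 hadj).resolve_left fun hcm ↦ ?_
  have hpc : F.col (b p) = c := by
    have : F.triangles.Adj (a i) (a c) (b p) := by
      rw [hFG, ← hm, adj_swap_right, hG.adj_pair_iff (ha c hni) hmp]
      exact Or.inl hcm
    exact ((hF.adj_pair_iff hp hni.symm).1 this).resolve_left hpi
  have hnadj : ¬ G.triangles.Adj (b n) (b p) (a c) :=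
    hG.not_adj_pair_of_col_ne (ha c hni) hnp (hcm ▸ hmn) (hcm ▸ hmp)
  rw [← hFG, ← adj_rotate, hF.adj_iff_of_col_eq hn hp (hG.injective.ne hnp) (hc.trans hpc.symm)]
    at hnadj
  exact hnadj hc

theorem col_eq_or_col_eq_of_one_common (hF : F.IsTopRow a) (hG : G.IsTopRow b)
    (hFG : F.triangles = G.triangles) (hmn : m ≠ n) (hmp : m ≠ p) (hnp : n ≠ p) (hm : b m = a i)
    (hn : b n ∉ Set.range a) (hp : b p ∉ Set.range a) (ha : ∀ j ≠ i, a j ∉ Set.range b) :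
    F.col (b n) = i ∨ F.col (b p) = i := by
  by_contra! ⟨hni, hpi⟩
  have hn' := hF.col_col_of_one_common hG hFG hmn hmp hnp hm hn hp ha hni hpi
  have hp' := hF.col_col_of_one_common hG hFG hmp hmn hnp.symm hm hp hn ha hpi hni
  have hc : F.col (b n) ≠ F.col (b p) := fun h ↦ hnp (by rw [← hn', h, hp'])
  have arc_pn : F.arc (b p) (b n) := by
    rw [← hF.adj_iff_arc hn hp rfl hc.symm, adj_rotate, hFG, hG.adj_pair_iff (ha _ hni) hnp]
    exact Or.inl hn'
  have arc_np : F.arc (b n) (b p) := by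
    rw [← hF.adj_iff_arc hp hn rfl hc, adj_rotate, hFG, hG.adj_pair_iff (ha _ hpi) hnp.symm]
    exact Or.inl hp'
  exact not_arc_of_arc arc_pn arc_np

theorem col_apply_of_one_common (hF : F.IsTopRow a) (hG : G.IsTopRow b)
    (hFG : F.triangles = G.triangles) (hmn : m ≠ n) (hmp : m ≠ p) (hnp : n ≠ p) (hm : b m = a i)
    (hn : b n ∉ Set.range a) (hp : b p ∉ Set.range a) (ha : a j ∉ Set.range b) (hij : i ≠ j)
    (hnc : F.col (b n) = i ∨ F.col (b n) = j) (hpc : F.col (b p) = i ∨ F.col (b p) = j) :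
    G.col (a j) = m := by
  refine hG.col_eq_of_adj_of_adj ha hmn hmp hnp ?_ ?_ <;> rw [← hFG, hm, adj_swap_right]
  exacts [(hF.adj_pair_iff hn hij).2 hnc, (hF.adj_pair_iff hp hij).2 hpc]

theorem isTwin_of_one_common_of_col_ne (hF : F.IsTopRow a) (hG : G.IsTopRow b)
    (hFG : F.triangles = G.triangles) (hmn : m ≠ n) (hmp : m ≠ p) (hnp : n ≠ p) (hm : b m = a i)
    (hn : b n ∉ Set.range a) (hp : b p ∉ Set.range a) (ha : a j ∉ Set.range b) (hij : i ≠ j)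
    (hni : F.col (b n) = i) (hpj : F.col (b p) = j) : F.triangles.IsTwin (b n) (a j) := by
  have col_aj := hF.col_apply_of_one_common hG hFG hmn hmp hnp hm hn hp ha hij (Or.inl hni)
    (Or.inr hpj)
  have adj_p (x : V) : F.triangles.Adj (a i) (b p) x ↔ G.triangles.Adj (b m) (b p) x := by
    rw [hFG, hm]
  have adj_n_iff_arc {x : V} (hx : x ∉ Set.range a) (hxi : F.col x ≠ i) :
      F.arc x (b n) ↔ G.triangles.Adj (b m) (b n) x := by
    rw [← hF.adj_iff_arc hn hx hni hxi, hFG, hm]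
  refine hF.isTwin_of_losesOnlyTo hn ⟨hni ▸ hij, fun x hx hxn ↦ ⟨fun harc ↦ ?_, fun hxj ↦ ?_⟩⟩
  · by_contra hxj
    have hxi : F.col x ≠ i := hni ▸ hxn
    have hxb := notMem_range_of_common hmn hmp hnp hm hx (ne_of_apply_ne F.col hxn)
      (ne_of_apply_ne F.col (hpj ▸ hxj))
    have col_x : G.col x = m := hG.col_eq_of_adj_of_adj hxb hmn hmp hnp
      ((adj_n_iff_arc hx hxi).1 harc)
      ((adj_p x).1 (hF.adj_of_col_ne hp hx (by omega) (by omega) hxi))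
    have hadj : F.triangles.Adj (a i) (a j) x := by
      rw [hFG, ← hm]
      exact (hG.adj_iff_of_col_eq ha hxb (ne_apply hx j) (col_aj.trans col_x.symm)).2 col_aj
    exact hF.not_adj_pair_of_col_ne hx hij hxi hxj hadj
  rcases eq_or_ne x (b p) with rfl | hxp
  · have hnadj : ¬ G.triangles.Adj (b p) (b n) (a j) :=
      hG.not_adj_pair_of_col_ne ha hnp.symm (col_aj ▸ hmp) (col_aj ▸ hmn)
    rw [← hFG, ← adj_rotate, hF.adj_iff_arc hp hn hpj (by omega)] at hnadj
    exact arc_of_not_arc hxn hnadj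
  · have hxb := notMem_range_of_common hmn hmp hnp hm hx (ne_of_apply_ne F.col hxn) hxp
    have hnadj : ¬ F.triangles.Adj (a i) (b p) x := by
      rw [hF.adj_iff_of_col_eq hp hx hxp.symm (hpj.trans hxj.symm)]
      omega
    have col_x : G.col x = n := hG.col_eq_of_not_adj hxb hmp hmn hnp.symm (mt (adj_p x).2 hnadj)
    exact (adj_n_iff_arc hx (by omega)).2 ((hG.adj_pair_iff hxb hmn).2 (Or.inr col_x))

theorem col_ne_of_one_common (hF : F.IsTopRow a) (hG : G.IsTopRow b)
    (hFG : F.triangles = G.triangles) (hmn : m ≠ n) (hmp : m ≠ p) (hnp : n ≠ p) (hm : b m = a i)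
    (hn : b n ∉ Set.range a) (hp : b p ∉ Set.range a) (ha : ∀ j ≠ i, a j ∉ Set.range b)
    (hni : F.col (b n) = i) (hpi : F.col (b p) = i) (hx : x ∉ Set.range a)
    (hxb : x ∉ Set.range b) (hxi : F.col x ≠ i) : G.col x ≠ m := by
  intro hxm
  obtain ⟨j, hji, hjx⟩ := Fin.exists_ne_and_ne_of_two_lt i (F.col x) (by norm_num)
  have col_aj := hF.col_apply_of_one_common hG hFG hmn hmp hnp hm hn hp (ha j hji) hji.symm
    (Or.inl hni) (Or.inl hpi)
  have hadj : F.triangles.Adj (a i) (a j) x := by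
    rw [hFG, ← hm]
    exact (hG.adj_iff_of_col_eq (ha j hji) hxb (ne_apply hx j) (col_aj.trans hxm.symm)).2 col_aj
  exact hF.not_adj_pair_of_col_ne hx hji.symm hxi hjx.symm hadj

theorem col_eq_col_iff_of_common (hF : F.IsTopRow a) (hG : G.IsTopRow b)
    (hFG : F.triangles = G.triangles) (hm : b m = a i) (hx : x ∉ Set.range a)
    (hy : y ∉ Set.range a) (hxb : x ∉ Set.range b) (hyb : y ∉ Set.range b) (hxi : F.col x ≠ i)
    (hyi : F.col y ≠ i) (hxm : G.col x ≠ m) (hym : G.col y ≠ m) :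
    F.col x = F.col y ↔ G.col x = G.col y := by
  rcases eq_or_ne x y with rfl | hxy
  · exact iff_of_true rfl rfl
  refine ⟨fun hc ↦ ?_, fun hc ↦ ?_⟩ <;> by_contra hc'
  · exact hxi <| (hF.adj_iff_of_col_eq hx hy hxy hc).1 <| hFG ▸ hm ▸
      hG.adj_of_col_ne hxb hyb hc' hxm hym
  · exact hxm <| (hG.adj_iff_of_col_eq hxb hyb hxy hc).1 <| hFG ▸ hm ▸
      hF.adj_of_col_ne hx hy hc' hxi hyi

theorem exists_isTwin_of_one_common_of_col_eq (hF : F.IsTopRow a) (hG : G.IsTopRow b)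
    (hFG : F.triangles = G.triangles) (hmn : m ≠ n) (hmp : m ≠ p) (hnp : n ≠ p) (hm : b m = a i)
    (hn : b n ∉ Set.range a) (hp : b p ∉ Set.range a) (ha : ∀ j ≠ i, a j ∉ Set.range b)
    (hni : F.col (b n) = i) (hpi : F.col (b p) = i) : ∃ j ≠ i, F.triangles.IsTwin (b n) (a j) := by
  have notMem {x : V} (hx : x ∉ Set.range a) (hxi : F.col x ≠ i) : x ∉ Set.range b :=
    notMem_range_of_common hmn hmp hnp hm hx (ne_of_apply_ne F.col (hni ▸ hxi))
      (ne_of_apply_ne F.col (hpi ▸ hxi))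
  have col_ne_m {x : V} (hx : x ∉ Set.range a) (hxi : F.col x ≠ i) : G.col x ≠ m :=
    hF.col_ne_of_one_common hG hFG hmn hmp hnp hm hn hp ha hni hpi hx (notMem hx hxi) hxi
  have col_eq_iff {x y : V} (hx : x ∉ Set.range a) (hy : y ∉ Set.range a) (hxi : F.col x ≠ i)
      (hyi : F.col y ≠ i) : F.col x = F.col y ↔ G.col x = G.col y :=
    hF.col_eq_col_iff_of_common hG hFG hm hx hy (notMem hx hxi) (notMem hy hyi) hxi hyi
      (col_ne_m hx hxi) (col_ne_m hy hyi)
  have arc_iff {x : V} (hx : x ∉ Set.range a) (hxi : F.col x ≠ i) :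
      F.arc x (b n) ↔ G.col x = n := by
    rw [← hF.adj_iff_arc hn hx hni hxi, hFG, ← hm, hG.adj_pair_iff (notMem hx hxi) hmn]
    exact or_iff_right (col_ne_m hx hxi)
  suffices ∃ j ≠ i, ∀ x ∉ Set.range a, F.col x ≠ i → (G.col x = n ↔ F.col x = j) by
    obtain ⟨j, hji, hj⟩ := this
    exact ⟨j, hji, hF.isTwin_of_losesOnlyTo hn ⟨hni ▸ hji.symm, fun x hx hxn ↦
      (arc_iff hx (hni ▸ hxn)).trans (hj x hx (hni ▸ hxn))⟩⟩
  by_cases hex : ∃ z ∉ Set.range a, F.col z ≠ i ∧ G.col z = n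
  · obtain ⟨z, hz, hzi, hzn⟩ := hex
    exact ⟨F.col z, hzi, fun x hx hxi ↦ by rw [col_eq_iff hx hz hxi hzi, hzn]⟩
  push Not at hex
  by_contra! hno
  obtain ⟨x, hx, hxi, hx'⟩ := hno (i + 1) (by omega)
  obtain ⟨y, hy, hyi, hy'⟩ := hno (i + 2) (by omega)
  have := col_eq_iff hx hy hxi hyi
  have := hex x hx hxi
  have := hex y hy hyi
  have := col_ne_m hx hxi
  have := col_ne_m hy hyi
  omega

theorem exists_isTwin_of_one_common (hF : F.IsTopRow a) (hG : G.IsTopRow b)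
    (hFG : F.triangles = G.triangles) (hmn : m ≠ n) (hmp : m ≠ p) (hnp : n ≠ p) (hm : b m = a i)
    (hn : b n ∉ Set.range a) (hp : b p ∉ Set.range a) (ha : ∀ j ≠ i, a j ∉ Set.range b) :
    ∃ q r, b q ∉ Set.range a ∧ a r ∉ Set.range b ∧ F.triangles.IsTwin (b q) (a r) := by
  by_cases hni : F.col (b n) = i <;> by_cases hpi : F.col (b p) = i
  · obtain ⟨j, hji, hj⟩ :=
      hF.exists_isTwin_of_one_common_of_col_eq hG hFG hmn hmp hnp hm hn hp ha hni hpi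
    exact ⟨n, j, hn, ha j hji, hj⟩
  · exact ⟨n, _, hn, ha _ hpi, hF.isTwin_of_one_common_of_col_ne hG hFG hmn hmp hnp hm hn hp
      (ha _ hpi) (Ne.symm hpi) hni rfl⟩
  · exact ⟨p, _, hp, ha _ hni, hF.isTwin_of_one_common_of_col_ne hG hFG hmp hmn hnp.symm hm hp hn
      (ha _ hni) (Ne.symm hni) hpi rfl⟩
  · exact ((hF.col_eq_or_col_eq_of_one_common hG hFG hmn hmp hnp hm hn hp ha).elim hni hpi).elim

theorem col_ne_col_of_disjoint (hF : F.IsTopRow a) (hG : G.IsTopRow b)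
    (hFG : F.triangles = G.triangles) (ha : ∀ i, a i ∉ Set.range b) (hb : ∀ m, b m ∉ Set.range a)
    (hmn : m ≠ n) (hmp : m ≠ p) (hnp : n ≠ p) : F.col (b m) ≠ F.col (b n) := by
  intro hc
  have adj_iff (i q r : Fin 3) : F.triangles.Adj (a i) (b q) (b r) ↔
      G.triangles.Adj (b q) (b r) (a i) := by rw [hFG, adj_rotate]
  have adj_iff_of_col {q r : Fin 3} (i : Fin 3) (hqr : q ≠ r) (h : F.col (b q) = F.col (b r)) :
      F.triangles.Adj (a i) (b q) (b r) ↔ F.col (b q) = i :=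
    hF.adj_iff_of_col_eq (hb q) (hb r) (hG.injective.ne hqr) h
  by_cases hp : F.col (b p) = F.col (b m)
  · have hmn' := (adj_iff_of_col _ hmn hc).2 rfl
    have hmp' := (adj_iff_of_col _ hmp hp.symm).2 rfl
    have hnp' := (adj_iff_of_col _ hnp (hc.symm.trans hp.symm)).2 rfl
    rw [← hc] at hnp'
    rw [adj_iff, hG.adj_pair_iff (ha _)] at hmn' hmp' hnp' <;> omega
  have col_ap : G.col (a (F.col (b p))) = p := by
    refine hG.col_eq_of_not_adj (ha _) hmn hmp hnp ?_
    rwa [← adj_iff, adj_iff_of_col _ hmn hc, eq_comm]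
  have not_adj {q : Fin 3} (hqp : q ≠ p) (hqm : F.col (b q) = F.col (b m)) :
      ¬ G.triangles.Adj (b q) (b p) (a (F.col (b m))) := by
    have hqp' : F.col (b q) ≠ F.col (b p) := hqm.symm ▸ Ne.symm hp
    have arc_qp : F.arc (b q) (b p) := by
      rw [← hF.adj_iff_arc (hb p) (hb q) rfl hqp', adj_iff, hG.adj_pair_iff (ha _) hqp.symm]
      exact Or.inl col_ap
    rw [← adj_iff, hF.adj_iff_arc (hb q) (hb p) hqm hp]
    exact not_arc_of_arc arc_qp
  have hn := hG.col_eq_of_not_adj (ha _) hmp hmn hnp.symm (not_adj hmp rfl)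
  have hm := hG.col_eq_of_not_adj (ha _) hnp hmn.symm hmp.symm (not_adj hnp hc.symm)
  exact hmn (hm.symm.trans hn)

theorem arc_and_arc_of_disjoint (hF : F.IsTopRow a) (hG : G.IsTopRow b)
    (hFG : F.triangles = G.triangles) (ha : ∀ i, a i ∉ Set.range b) (hb : ∀ m, b m ∉ Set.range a)
    (hmn : F.arc (b m) (b n)) (hnp : F.arc (b n) (b p)) (hpm : F.arc (b p) (b m))
    (hx : x ∉ Set.range a) (hxb : x ∉ Set.range b) (hc : F.col x = F.col (b m)) :
    F.arc x (b n) ∧ F.arc (b p) x := by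
  have hmn' : m ≠ n := ne_of_apply_ne (F.col ∘ b) (col_ne_of_arc hmn)
  have hnp' : n ≠ p := ne_of_apply_ne (F.col ∘ b) (col_ne_of_arc hnp)
  have hxn : F.col x ≠ F.col (b n) := hc ▸ col_ne_of_arc hmn
  have adj_mn : G.triangles.Adj (b m) (b n) x := by
    rw [← hFG]
    exact ⟨⟨hG.injective.ne hmn', ne_apply hxb m, ne_apply hxb n⟩,
      fun h ↦ hxn h.2.symm, fun h ↦ col_ne_of_arc h.2 hc.symm,
      fun h ↦ not_arc_of_arc hmn h.1, fun h ↦ col_ne_of_arc h.1 hc⟩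
  have col_an : G.col (a (F.col (b n))) = m := by
    refine ((hG.adj_pair_iff (ha _) hmn').1 ?_).resolve_right fun h ↦ ?_
    · rw [← hFG, adj_swap, ← adj_rotate, hF.adj_iff_arc (hb n) (hb m) rfl (col_ne_of_arc hmn)]
      exact hmn
    · have hadj := (hG.adj_pair_iff (ha _) hnp').2 (Or.inl h)
      rw [← hFG, ← adj_rotate, hF.adj_iff_arc (hb n) (hb p) rfl (col_ne_of_arc hnp).symm] at hadj
      exact not_arc_of_arc hnp hadj
  have col_x : G.col x = n := by
    refine ((hG.adj_pair_iff hxb hmn').1 adj_mn).resolve_left fun h ↦ ?_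
    have hadj := (hG.adj_iff_of_col_eq (ha _) hxb (ne_apply hx _) (col_an.trans h.symm)).2 col_an
    rw [← hFG, adj_swap, hF.adj_iff_of_col_eq (hb m) hx (ne_apply hxb m) hc.symm] at hadj
    exact col_ne_of_arc hmn hadj
  have adj_np : F.triangles.Adj (b n) (b p) x :=
    hFG ▸ (hG.adj_pair_iff hxb hnp').2 (Or.inl col_x)
  obtain ⟨-, -, not_dom_n, -, not_dom_x⟩ := adj_np
  have arc_xn := arc_of_not_arc hxn fun h ↦ not_dom_n ⟨hnp, h⟩
  exact ⟨arc_xn, arc_of_not_arc (hc ▸ col_ne_of_arc hpm) fun h ↦ not_dom_x ⟨arc_xn, h⟩⟩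

theorem isTwin_of_disjoint (hF : F.IsTopRow a) (hG : G.IsTopRow b)
    (hFG : F.triangles = G.triangles) (ha : ∀ i, a i ∉ Set.range b) (hb : ∀ m, b m ∉ Set.range a)
    (hmn : F.arc (b m) (b n)) (hnp : F.arc (b n) (b p)) (hpm : F.arc (b p) (b m)) :
    F.triangles.IsTwin (b n) (a (F.col (b m))) := by
  have hmn' := col_ne_of_arc hmn
  have hnp' := col_ne_of_arc hnp
  have hpm' := col_ne_of_arc hpm
  have index_eq := eq_or_eq_or_eq_of_ne (ne_of_apply_ne (F.col ∘ b) hmn')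
    (ne_of_apply_ne (F.col ∘ b) hpm'.symm) (ne_of_apply_ne (F.col ∘ b) hnp')
  refine hF.isTwin_of_losesOnlyTo (hb n) ⟨hmn'.symm, fun x hx hxn ↦ ⟨fun harc ↦ ?_, fun hxm ↦ ?_⟩⟩
  · by_contra hxm
    have hxp : F.col x = F.col (b p) := by omega
    refine not_arc_of_arc harc ?_
    by_cases hxb : x ∈ Set.range b
    · obtain ⟨q, rfl⟩ := hxb
      obtain rfl | rfl | rfl := index_eq q
      exacts [(hxm rfl).elim, (hxn rfl).elim, hnp]
    · exact (hF.arc_and_arc_of_disjoint hG hFG ha hb hpm hmn hnp hx hxb hxp).2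
  · by_cases hxb : x ∈ Set.range b
    · obtain ⟨q, rfl⟩ := hxb
      obtain rfl | rfl | rfl := index_eq q
      exacts [hmn, (hxn rfl).elim, (hpm' hxm).elim]
    · exact (hF.arc_and_arc_of_disjoint hG hFG ha hb hmn hnp hpm hx hxb hxm).1

theorem exists_isTwin_of_disjoint (hF : F.IsTopRow a) (hG : G.IsTopRow b)
    (hFG : F.triangles = G.triangles) (ha : ∀ i, a i ∉ Set.range b)
    (hb : ∀ m, b m ∉ Set.range a) : ∃ q r, F.triangles.IsTwin (b q) (a r) := by
  have h₀₁ : F.col (b 0) ≠ F.col (b 1) :=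
    hF.col_ne_col_of_disjoint (p := 2) hG hFG ha hb (by decide) (by decide) (by decide)
  have h₁₂ : F.col (b 1) ≠ F.col (b 2) :=
    hF.col_ne_col_of_disjoint (p := 0) hG hFG ha hb (by decide) (by decide) (by decide)
  have h₂₀ : F.col (b 2) ≠ F.col (b 0) :=
    hF.col_ne_col_of_disjoint (p := 1) hG hFG ha hb (by decide) (by decide) (by decide)
  have adj_b : F.triangles.Adj (b 0) (b 1) (b 2) :=
    hFG ▸ hG.adj_row (by decide) (by decide) (by decide)
  obtain ⟨-, -, not_dom₀, not_dom₁, not_dom₂⟩ := adj_b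
  by_cases arc₀₁ : F.arc (b 0) (b 1)
  · have arc₂₀ := arc_of_not_arc h₂₀ fun h ↦ not_dom₀ ⟨arc₀₁, h⟩
    have arc₁₂ := arc_of_not_arc h₁₂ fun h ↦ not_dom₂ ⟨arc₂₀, h⟩
    exact ⟨_, _, hF.isTwin_of_disjoint hG hFG ha hb arc₀₁ arc₁₂ arc₂₀⟩
  · have arc₁₀ := arc_of_not_arc h₀₁.symm arc₀₁
    have arc₂₁ := arc_of_not_arc h₁₂.symm fun h ↦ not_dom₁ ⟨arc₁₀, h⟩
    have arc₀₂ := arc_of_not_arc h₂₀.symm fun h ↦ not_dom₂ ⟨h, arc₂₁⟩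
    exact ⟨_, _, hF.isTwin_of_disjoint hG hFG ha hb arc₁₀ arc₀₂ arc₂₁⟩

theorem exists_isTwin (hF : F.IsTopRow a) (hG : G.IsTopRow b) (hFG : F.triangles = G.triangles)
    (hp : b p ∉ Set.range a) :
    ∃ q r, b q ∉ Set.range a ∧ a r ∉ Set.range b ∧ F.triangles.IsTwin (b q) (a r) := by
  obtain ⟨m, n, hpm, hpn, hmn⟩ := exists_ne_and_ne p
  have hmp := hpm.symm
  have hnp := hpn.symm
  have one_common {m n i : Fin 3} (hmn : m ≠ n) (hmp : m ≠ p) (hnp : n ≠ p) (hm : b m = a i)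
      (hn : b n ∉ Set.range a) :
      ∃ q r, b q ∉ Set.range a ∧ a r ∉ Set.range b ∧ F.triangles.IsTwin (b q) (a r) := by
    refine hF.exists_isTwin_of_one_common hG hFG hmn hmp hnp hm hn hp fun j hji ↦ ?_
    rintro ⟨q, hq⟩
    rcases eq_or_eq_or_eq_of_ne hmn hmp hnp q with rfl | rfl | rfl
    exacts [hji (hF.injective (hq.symm.trans hm)), hn ⟨j, hq.symm⟩, hp ⟨j, hq.symm⟩]
  by_cases hm : b m ∈ Set.range a <;> by_cases hn : b n ∈ Set.range a
  · obtain ⟨i, hi⟩ := hm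
    obtain ⟨j, hj⟩ := hn
    exact ⟨p, (hF.exists_isTwin_of_two_common hG hFG hmn hmp hnp hi.symm hj.symm hp).imp
      fun _ h ↦ ⟨hp, h⟩⟩
  · obtain ⟨i, hi⟩ := hm
    exact one_common hmn hmp hnp hi.symm hn
  · obtain ⟨i, hi⟩ := hn
    exact one_common hmn.symm hnp hmp hi.symm hm
  · have hb (q : Fin 3) : b q ∉ Set.range a := by
      rcases eq_or_eq_or_eq_of_ne hmn hmp hnp q with rfl | rfl | rfl <;> assumption
    have ha (r : Fin 3) : a r ∉ Set.range b := fun ⟨q, hq⟩ ↦ hb q ⟨r, hq.symm⟩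
    obtain ⟨q, r, h⟩ := hF.exists_isTwin_of_disjoint hG hFG ha hb
    exact ⟨q, r, hb q, ha r, h⟩

end CommonTriangles

variable {V W : Type*} {F : ColumnTournament V} {G : ColumnTournament W} {a : Fin 3 → V}
  {b : Fin 3 → W} {π : Equiv.Perm (Fin 3)}

theorem comp_iso (hF : F.IsTopRow a) (e : F.Iso G π) :
    G.IsTopRow (e.toEquiv ∘ a ∘ π.symm) where
  injective := e.toEquiv.injective.comp (hF.injective.comp π.symm.injective)
  loses i := by
    have hi := hF.loses (π.symm i)
    have col_apply (x : V) : G.col (e.toEquiv x) = π (F.col x) := e.col_apply x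
    have arc_apply (x y : V) : G.arc (e.toEquiv x) (e.toEquiv y) = F.arc x y := e.arc_apply x y
    refine ⟨fun h ↦ hi.1 (π.injective ?_), fun x hx hc ↦ ?_⟩
    · simpa [col_apply] using h
    obtain ⟨x, rfl⟩ := e.toEquiv.surjective x
    have hxa : x ∉ Set.range a := fun ⟨j, hj⟩ ↦ hx ⟨π j, by simp [hj]⟩
    simp only [Function.comp_apply, arc_apply, col_apply, ne_eq, π.injective.eq_iff] at hc ⊢
    rw [hi.2 x hxa hc, π.eq_symm_apply]
  arc_row {i j} h₁ h₂ h₃ := by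
    have col_apply (x : V) : G.col (e.toEquiv x) = π (F.col x) := e.col_apply x
    have arc_apply (x y : V) : G.arc (e.toEquiv x) (e.toEquiv y) = F.arc x y := e.arc_apply x y
    simp only [Function.comp_apply, arc_apply, col_apply, ne_eq, π.injective.eq_iff] at h₁ h₂ h₃ ⊢
    exact hF.arc_row (π.eq_symm_apply.2 h₁) (fun h ↦ h₂ (π.eq_symm_apply.1 h)) h₃

theorem exists_isTwin_of_iso (hF : F.IsTopRow a) (hG : G.IsTopRow b)
    (e : F.triangles.Iso G.triangles) {p : Fin 3} (hp : e.toEquiv.symm (b p) ∉ Set.range a) :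
    ∃ q r, e.toEquiv.symm (b q) ∉ Set.range a ∧ e.toEquiv (a r) ∉ Set.range b ∧
      F.triangles.IsTwin (e.toEquiv.symm (b q)) (a r) := by
  have hG' := hG.comp_iso (G.isoTransport e.toEquiv.symm 1)
  have hFG : F.triangles = (G.transport e.toEquiv.symm 1).triangles := by
    refine TripleSystem.ext ?_
    ext x y z
    rw [← e.adj_iff]
    exact ((G.isoTransport e.toEquiv.symm 1).triangles.symm.adj_iff x y z)
  obtain ⟨q, r, hq, hr, h⟩ := hF.exists_isTwin hG' hFG hp
  exact ⟨q, r, hq, fun ⟨m, hm⟩ ↦ hr ⟨m, e.toEquiv.symm_apply_eq.2 hm⟩, h⟩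

theorem exists_iso_apply_eq (hF : F.IsTopRow a) (hG : G.IsTopRow b)
    (e : F.triangles.Iso G.triangles) :
    ∃ (e' : F.triangles.Iso G.triangles) (π : Equiv.Perm (Fin 3)),
      ∀ i, e'.toEquiv (a i) = b (π i) := by
  classical
  induction hk : #{m | e.toEquiv.symm (b m) ∉ Set.range a} using Nat.strong_induction_on
    generalizing e with
  | _ k ih =>
    by_cases hall : ∀ m, e.toEquiv.symm (b m) ∈ Set.range a
    · choose f hf using hall
      have hf_inj : Function.Injective f := fun m n h ↦
        hG.injective (e.toEquiv.symm.injective (by rw [← hf, ← hf, h]))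
      refine ⟨e, (Equiv.ofBijective f (Finite.injective_iff_bijective.1 hf_inj)).symm, fun i ↦ ?_⟩
      rw [← Equiv.eq_symm_apply, ← hf]
      exact congrArg a (Equiv.ofBijective_apply_symm_apply f _ i).symm
    · push Not at hall
      obtain ⟨p, hp⟩ := hall
      obtain ⟨q, r, hq, hr, htwin⟩ := hF.exists_isTwin_of_iso hG e hp
      refine ih _ ?_ (htwin.swapIso.trans e) rfl
      have symm_apply (m : Fin 3) : (htwin.swapIso.trans e).toEquiv.symm (b m) =
          Equiv.swap (e.toEquiv.symm (b q)) (a r) (e.toEquiv.symm (b m)) := rfl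
      rw [← hk]
      refine Finset.card_lt_card (Finset.ssubset_iff_of_subset ?_ |>.2 ⟨q, by simpa using hq, ?_⟩)
      · intro m
        simp only [Finset.mem_filter_univ, symm_apply]
        refine mt fun hm ↦ ?_
        have hmq : e.toEquiv.symm (b m) ≠ e.toEquiv.symm (b q) := fun h ↦ hq (h ▸ hm)
        have hmr : e.toEquiv.symm (b m) ≠ a r := fun h ↦ hr ⟨m, e.toEquiv.symm_apply_eq.1 h⟩
        rwa [Equiv.swap_apply_of_ne_of_ne hmq hmr]
      · simp [symm_apply]

theorem notMem_range_of_apply_eq {e : V ≃ W} (he : ∀ i, e (a i) = b (π i)) {x : V}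
    (hx : x ∉ Set.range a) : e x ∉ Set.range b := by
  rintro ⟨j, hj⟩
  refine hx ⟨π.symm j, e.injective ?_⟩
  rw [he, π.apply_symm_apply, hj]

theorem col_apply_of_apply_eq (hF : F.IsTopRow a) (hG : G.IsTopRow b)
    (e : F.triangles.Iso G.triangles) (he : ∀ i, e.toEquiv (a i) = b (π i)) {x : V}
    (hx : x ∉ Set.range a) : G.col (e.toEquiv x) = π (F.col x) := by
  obtain ⟨j, l, hij, hil, hjl⟩ := exists_ne_and_ne (F.col x)
  refine hG.col_eq_of_adj_of_adj (notMem_range_of_apply_eq he hx) (π.injective.ne hij)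
    (π.injective.ne hil) (π.injective.ne hjl) ?_ ?_ <;>
    rw [← he, ← he]
  · exact (e.adj_iff _ _ _).2 ((hF.adj_pair_iff hx hij).2 (Or.inl rfl))
  · exact (e.adj_iff _ _ _).2 ((hF.adj_pair_iff hx hil).2 (Or.inl rfl))

theorem arc_apply_of_apply_eq (hF : F.IsTopRow a) (hG : G.IsTopRow b)
    (e : F.triangles.Iso G.triangles) (he : ∀ i, e.toEquiv (a i) = b (π i)) {x y : V}
    (hx : x ∉ Set.range a) (hy : y ∉ Set.range a) :
    G.arc (e.toEquiv x) (e.toEquiv y) = F.arc x y := by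
  have col_apply {z : V} (hz : z ∉ Set.range a) := hF.col_apply_of_apply_eq hG e he hz
  by_cases hc : F.col x = F.col y
  · rw [F.arc_of_col_eq hc, G.arc_of_col_eq (by rw [col_apply hx, col_apply hy, hc])]
  · rw [Bool.eq_iff_iff, ← hF.adj_iff_arc hy hx rfl hc, ← e.adj_iff]
    have hc' : G.col (e.toEquiv x) ≠ π (F.col y) := col_apply hx ▸ π.injective.ne hc
    rw [← hG.adj_iff_arc (notMem_range_of_apply_eq he hy) (notMem_range_of_apply_eq he hx)
      (col_apply hy) hc', ← he]
    rfl

end IsTopRow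

end ColumnTournament

/-! ### Adding a row -/

theorem exists_equiv_of_apply_inr {V W X : Type*} {σ : V ⊕ X ≃ W ⊕ X} {π : Equiv.Perm X}
    (h : ∀ i, σ (.inr i) = .inr (π i)) : ∃ τ : V ≃ W, ∀ x, σ (.inl x) = .inl (τ x) := by
  have apply_inl (x : V) : ∃ y, σ (.inl x) = .inl y := by
    rcases hx : σ (.inl x) with y | j
    · exact ⟨y, rfl⟩
    · have : σ (.inr (π.symm j)) = σ (.inl x) := by rw [h, hx, π.apply_symm_apply]
      simp at this
  choose f hf using apply_inl
  refine ⟨Equiv.ofBijective f ⟨fun x y hxy ↦ ?_, fun y ↦ ?_⟩, hf⟩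
  · exact Sum.inl_injective (σ.injective (by rw [hf, hf, hxy]))
  · rcases hy : σ.symm (.inl y) with x | i
    · exact ⟨x, Sum.inl_injective (by rw [← hf, ← hy, σ.apply_symm_apply])⟩
    · rw [Equiv.symm_apply_eq, h] at hy
      simp at hy

namespace ColumnTournament

/-- Three vertices that can be added on top of a column tournament: the vertex `i` will lose exactly
to the older vertices of column `i`. -/
@[ext]
structure Row extends ColumnTournament (Fin 3) where
  isTopRow : toColumnTournament.IsTopRow id

variable {V W : Type*} {F : ColumnTournament V} {G : ColumnTournament W}

/-- The column tournament with the vertices of `ρ` added on top of `F`. -/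
def addRow (F : ColumnTournament V) (ρ : Row) : ColumnTournament (V ⊕ Fin 3) where
  col := Sum.elim F.col ρ.col
  arc
    | .inl x, .inl y => F.arc x y
    | .inl x, .inr i => F.col x = i
    | .inr i, .inl x => F.col x ≠ i ∧ F.col x ≠ ρ.col i
    | .inr i, .inr j => ρ.arc i j
  arc_of_col_eq {x y} h := by
    have := ρ.isTopRow.col_ne
    rcases x with x | i <;> rcases y with y | j
    · exact F.arc_of_col_eq h
    · simp_all
    · simp_all
    · exact ρ.arc_of_col_eq h
  arc_of_col_ne {x y} h := by
    rcases x with x | i <;> rcases y with y | j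
    · exact F.arc_of_col_ne h
    · simp_all
    · simp_all [eq_comm]
    · exact ρ.arc_of_col_ne h
  no_four_cycle {x x' y y'} hx hy h₁ h₂ h₃ h₄ := by
    have arc_row {i j} : ρ.arc i j → ρ.col i = j := ρ.isTopRow.col_eq_of_arc_row
    have old := @F.no_four_cycle
    have new := @ρ.no_four_cycle
    -- On a mixed cycle, an arc from an old to a new vertex forces the next two vertices to be new,
    -- and the second of them to be the new vertex again, against the orientation.
    rcases x with x | i <;> rcases y with y | j <;> rcases x' with x' | i' <;>
      rcases y' with y' | j' <;>
      simp only [Sum.elim_inl, Sum.elim_inr, decide_eq_true_eq] at hx hy h₁ h₂ h₃ h₄ <;> grind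

theorem notMem_range_inr {X : Type*} (x : V) : Sum.inl x ∉ Set.range (Sum.inr : X → V ⊕ X) := by
  simp

theorem isTopRow_inr (F : ColumnTournament V) (ρ : Row) : (F.addRow ρ).IsTopRow Sum.inr where
  injective := Sum.inr_injective
  loses i := by
    refine ⟨ρ.isTopRow.col_ne i, ?_⟩
    rintro (x | j) hx -
    · simp [addRow]
    · simp at hx
  arc_row := ρ.isTopRow.arc_row

theorem exists_iso_of_iso_triangles_addRow {ρ ρ' : Row}
    (e : (F.addRow ρ).triangles.Iso (G.addRow ρ').triangles) : ∃ π, Nonempty (F.Iso G π) := by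
  have hF := F.isTopRow_inr ρ
  have hG := G.isTopRow_inr ρ'
  obtain ⟨e, π, he⟩ := hF.exists_iso_apply_eq hG e
  obtain ⟨τ, hτ⟩ := exists_equiv_of_apply_inr he
  refine ⟨π, ⟨τ, fun x ↦ ?_, fun x y ↦ ?_⟩⟩
  · have := hF.col_apply_of_apply_eq hG e he (notMem_range_inr x)
    rwa [hτ] at this
  · have := hF.arc_apply_of_apply_eq hG e he (notMem_range_inr x) (notMem_range_inr y)
    rwa [hτ, hτ] at this

/-- Exchanging two vertices of one column with the same arcs is an automorphism. -/
def swapIso [DecidableEq V] {u v : V} (hcol : F.col u = F.col v)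
    (harc : ∀ x, x ≠ u → x ≠ v → F.arc x u = F.arc x v) : F.Iso F 1 where
  toEquiv := Equiv.swap u v
  col_apply x := by
    simp only [Equiv.toFun_as_coe, Equiv.swap_apply_def, Equiv.Perm.coe_one, id_eq]
    grind
  arc_apply x y := by
    have harc' (x : V) (hu : x ≠ u) (hv : x ≠ v) : F.arc u x = F.arc v x := by
      by_cases hc : F.col u = F.col x
      · rw [F.arc_of_col_eq hc, F.arc_of_col_eq (hcol.symm.trans hc)]
      · rw [F.arc_of_col_ne hc, F.arc_of_col_ne (x := v) (hcol ▸ hc), harc x hu hv]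
    have := @F.arc_of_col_eq
    simp only [Equiv.toFun_as_coe, Equiv.swap_apply_def]
    grind

namespace IsTopRow

variable {a b : Fin 3 → V} {i m : Fin 3} {x : V}

theorem col_eq_col_of_notMem (ha : F.IsTopRow a) (hb : F.IsTopRow b) (hai : a i ∉ Set.range b)
    (hbi : b i ∉ Set.range a) : F.col (a i) = F.col (b i) := by
  by_contra hc
  by_cases harc : F.arc (a i) (b i)
  · exact ha.col_ne i ((hb.loses i).col_eq_of_arc hai harc)
  · exact hb.col_ne i ((ha.loses i).col_eq_of_arc hbi (arc_of_not_arc (Ne.symm hc) harc))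

theorem mem_range_of_apply_eq (ha : F.IsTopRow a) (hb : F.IsTopRow b) (him : a i = b m)
    (hne : i ≠ m) (hx : x ∉ Set.range a) (hxc : F.col x ≠ F.col (a i)) : x ∈ Set.range b := by
  by_contra hxb
  have arc_iff_i := (ha.loses i).2 x hx hxc
  have arc_iff_m := (hb.loses m).2 x hxb (him ▸ hxc)
  rw [← him, arc_iff_i] at arc_iff_m
  have := ha.col_ne i
  have := him ▸ hb.col_ne m
  omega

theorem index_eq_of_apply_eq (ha : F.IsTopRow a) (hb : F.IsTopRow b)
    (hne : ∀ c, ∃ x ∉ Set.range a, F.col x = c) (htwo : ∀ c x, ∃ y ≠ x, F.col y = c)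
    (him : a i = b m) : i = m := by
  by_contra hne_im
  obtain ⟨l, hli, hlm⟩ := Fin.exists_ne_and_ne_of_two_lt i m (by norm_num)
  have index_eq := eq_or_eq_or_eq_of_ne hne_im hli.symm hlm.symm
  have col_ai : F.col (a i) = l := by
    have := ha.col_ne i
    have := him ▸ hb.col_ne m
    omega
  have mem_range_b {x : V} (hx : x ∉ Set.range a) (hxl : F.col x ≠ l) : x ∈ Set.range b :=
    ha.mem_range_of_apply_eq hb him hne_im hx (col_ai ▸ hxl)
  have eq_bl {x : V} (hx : x ∉ Set.range a) (hxi : F.col x = i) : x = b l := by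
    obtain ⟨q, rfl⟩ := mem_range_b hx (hxi ▸ hli.symm)
    rcases index_eq q with rfl | rfl | rfl
    exacts [(hb.col_ne _ hxi).elim, (hx ⟨i, him⟩).elim, rfl]
  obtain ⟨x, hx, hxi⟩ := hne i
  obtain rfl := eq_bl hx hxi
  have eq_bi {y : V} (hy : y ∉ Set.range a) (hym : F.col y = m) : y = b i := by
    obtain ⟨q, rfl⟩ := mem_range_b hy (hym ▸ hlm.symm)
    rcases index_eq q with rfl | rfl | rfl
    exacts [rfl, (hy ⟨i, him⟩).elim, (hne_im (hxi.symm.trans hym)).elim]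
  obtain ⟨y, hy, hym⟩ := hne m
  obtain rfl := eq_bi hy hym
  have hal : a l ∉ Set.range b := by
    rintro ⟨q, hq⟩
    rcases index_eq q with rfl | rfl | rfl
    exacts [hy ⟨l, hq.symm⟩, hli (ha.injective (hq.symm.trans him.symm)), hx ⟨_, hq.symm⟩]
  have col_al : F.col (a l) = i := (ha.col_eq_col_of_notMem hb hal hx).trans hxi
  obtain ⟨z, hz, hzm⟩ := htwo m (b i)
  refine hz (eq_bi ?_ hzm)
  rintro ⟨q, rfl⟩
  have := ha.col_ne q
  rcases index_eq q with rfl | rfl | rfl <;> omega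

theorem col_eq_col (ha : F.IsTopRow a) (hb : F.IsTopRow b) (hab : ∀ i m, a i = b m → i = m)
    (i : Fin 3) : F.col (a i) = F.col (b i) := by
  by_cases hi : a i = b i
  · rw [hi]
  · exact ha.col_eq_col_of_notMem hb (fun ⟨m, hm⟩ ↦ hi ((hab i m hm.symm).symm ▸ hm.symm))
      fun ⟨m, hm⟩ ↦ hi (hab m i hm ▸ hm)

theorem arc_eq_arc_of_notMem (ha : F.IsTopRow a) (hb : F.IsTopRow b) (ham : a m ∉ Set.range b)
    (hbi : b i ∉ Set.range a) (hc : F.col (a i) = F.col (b i)) (hmi : F.col (a m) ≠ F.col (a i)) :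
    F.arc (a m) (a i) = F.arc (a m) (b i) := by
  rw [Bool.eq_iff_iff, (hb.loses i).2 _ ham (hc ▸ hmi)]
  refine ⟨ha.col_eq_of_arc_row, fun hm ↦ ha.arc_row hm (fun hi ↦ ?_) hmi⟩
  exact not_arc_of_arc ((hb.loses i).arc_to ham hm) ((ha.loses m).arc_to hbi (hc.symm.trans hi))

theorem arc_eq_arc (ha : F.IsTopRow a) (hb : F.IsTopRow b) (hab : ∀ i m, a i = b m → i = m)
    (hxa : x ≠ a i) (hxb : x ≠ b i) : F.arc x (a i) = F.arc x (b i) := by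
  by_cases hi : a i = b i
  · rw [hi]
  have hai : a i ∉ Set.range b := fun ⟨m, hm⟩ ↦ hi ((hab i m hm.symm).symm ▸ hm.symm)
  have hbi : b i ∉ Set.range a := fun ⟨m, hm⟩ ↦ hi (hab m i hm ▸ hm)
  have hc := ha.col_eq_col_of_notMem hb hai hbi
  by_cases hxc : F.col x = F.col (a i)
  · rw [F.arc_of_col_eq hxc, F.arc_of_col_eq (hxc.trans hc)]
  by_cases hx : x ∈ Set.range a <;> by_cases hx' : x ∈ Set.range b
  · obtain ⟨m, rfl⟩ := hx
    obtain ⟨m', hm⟩ := hx'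
    obtain rfl := hab m m' hm.symm
    rw [F.arc_of_col_ne hxc, F.arc_of_col_ne (y := b i) (hc ▸ hxc), Bool.not_inj_iff,
      Bool.eq_iff_iff, (ha.loses m).2 _ hbi (hc ▸ Ne.symm hxc), ← hm,
      (hb.loses m).2 _ hai (hm ▸ Ne.symm hxc), hc]
  · obtain ⟨m, rfl⟩ := hx
    exact ha.arc_eq_arc_of_notMem hb hx' hbi hc hxc
  · obtain ⟨m, rfl⟩ := hx'
    exact (hb.arc_eq_arc_of_notMem ha hx hai hc.symm (hc ▸ hxc)).symm
  · rw [Bool.eq_iff_iff, (ha.loses i).2 x hx hxc, (hb.loses i).2 x hx' (hc ▸ hxc)]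

theorem exists_iso_apply_eq_of_index_eq (ha : F.IsTopRow a) (hb : F.IsTopRow b)
    (hab : ∀ i m, a i = b m → i = m) : ∃ e : F.Iso F 1, ∀ i, e.toEquiv (a i) = b i := by
  classical
  let swap (i : Fin 3) : F.Iso F 1 :=
    swapIso (ha.col_eq_col hb hab i) fun x hxa hxb ↦ ha.arc_eq_arc hb hab hxa hxb
  have swap_a {i j : Fin 3} (hij : i ≠ j) : Equiv.swap (a j) (b j) (a i) = a i :=
    Equiv.swap_apply_of_ne_of_ne (ha.injective.ne hij) fun h ↦ hij (hab i j h)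
  have swap_b {i j : Fin 3} (hij : i ≠ j) : Equiv.swap (a j) (b j) (b i) = b i :=
    Equiv.swap_apply_of_ne_of_ne (fun h ↦ hij (hab j i h.symm).symm) (hb.injective.ne hij)
  refine ⟨((swap 0).trans (swap 1)).trans (swap 2), fun i ↦ ?_⟩
  change Equiv.swap (a 2) (b 2) (Equiv.swap (a 1) (b 1) (Equiv.swap (a 0) (b 0) (a i))) = b i
  fin_cases i
  · simp [swap_b]
  · simp [swap_a, swap_b]
  · simp [swap_a]

end IsTopRow

theorem iso_and_row_eq_of_iso_addRow {ρ ρ' : Row} {π : Equiv.Perm (Fin 3)}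
    (e : (F.addRow ρ).Iso (G.addRow ρ') π) (hne : Function.Surjective F.col)
    (htwo : ∀ c x, ∃ y ≠ x, (F.addRow ρ).col y = c) :
    Nonempty (F.Iso G π) ∧ (∀ i, ρ'.col (π i) = π (ρ.col i)) ∧
      ∀ i j, ρ'.arc (π i) (π j) = ρ.arc i j := by
  have ha := F.isTopRow_inr ρ
  have hb := (G.isTopRow_inr ρ').comp_iso e.symm
  have hab (i m : Fin 3) := ha.index_eq_of_apply_eq (i := i) (m := m) hb (fun c ↦
    (hne c).elim fun x hx ↦ ⟨.inl x, notMem_range_inr x, hx⟩) htwo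
  obtain ⟨φ, hφ⟩ := ha.exists_iso_apply_eq_of_index_eq hb hab
  let e' : (F.addRow ρ).Iso (G.addRow ρ') π := φ.trans e
  have he' (i : Fin 3) : e'.toEquiv (.inr i) = .inr (π i) :=
    (congrArg e.toEquiv (hφ i)).trans (e.toEquiv.apply_symm_apply _)
  obtain ⟨τ, hτ⟩ := exists_equiv_of_apply_inr he'
  refine ⟨⟨τ, fun x ↦ ?_, fun x y ↦ ?_⟩, fun i ↦ ?_, fun i j ↦ ?_⟩
  · have := e'.col_apply (.inl x)
    rwa [Equiv.toFun_as_coe, hτ] at this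
  · have := e'.arc_apply (.inl x) (.inl y)
    rwa [Equiv.toFun_as_coe, hτ, hτ] at this
  · have := e'.col_apply (.inr i)
    rwa [Equiv.toFun_as_coe, he'] at this
  · have := e'.arc_apply (.inr i) (.inr j)
    rwa [Equiv.toFun_as_coe, he', he'] at this

end ColumnTournament

/-! ### Counting triangles -/

theorem sum_fin_three_of_ne {i j l : Fin 3} (hij : i ≠ j) (hil : i ≠ l) (hjl : j ≠ l)
    (f : Fin 3 → ℕ) : ∑ m, f m = f i + f j + f l := by
  have univ_eq : (Finset.univ : Finset (Fin 3)) = {i, j, l} := by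
    ext m
    simpa using eq_or_eq_or_eq_of_ne hij hil hjl m
  rw [univ_eq, Finset.sum_insert (by simp [hij, hil]), Finset.sum_pair hjl, add_assoc]

open scoped Classical in
theorem TripleSystem.tripleCount_sum {V X : Type*} [Fintype V] [Fintype X]
    (H : TripleSystem (V ⊕ X)) :
    H.tripleCount = (∑ x, ∑ y, ∑ z, if H.Adj (.inl x) (.inl y) (.inl z) then 1 else 0) +
      3 * (∑ x, ∑ y, ∑ i, if H.Adj (.inr i) (.inl x) (.inl y) then 1 else 0) +
      3 * (∑ x, ∑ i, ∑ j, if H.Adj (.inr i) (.inr j) (.inl x) then 1 else 0) +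
      ∑ i, ∑ j, ∑ l, if H.Adj (.inr i) (.inr j) (.inr l) then 1 else 0 := by
  have inl_inl_inr (x y : V) (i : X) :
      H.Adj (.inl x) (.inl y) (.inr i) ↔ H.Adj (.inr i) (.inl x) (.inl y) := adj_rotate.symm
  have inl_inr_inl (x y : V) (i : X) :
      H.Adj (.inl x) (.inr i) (.inl y) ↔ H.Adj (.inr i) (.inl x) (.inl y) := adj_swap
  have inl_inr_inr (x : V) (i j : X) :
      H.Adj (.inl x) (.inr i) (.inr j) ↔ H.Adj (.inr i) (.inr j) (.inl x) := adj_rotate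
  have inr_inl_inr (x : V) (i j : X) :
      H.Adj (.inr i) (.inl x) (.inr j) ↔ H.Adj (.inr i) (.inr j) (.inl x) := adj_swap_right
  simp only [tripleCount_eq_sum, Fintype.sum_sum_type, Finset.sum_add_distrib, inl_inl_inr,
    inl_inr_inl, inl_inr_inr, inr_inl_inr]
  simp only [Finset.sum_comm (s := (Finset.univ : Finset X)) (t := (Finset.univ : Finset V))]
  ring

namespace ColumnTournament

variable {V : Type*} {F : ColumnTournament V} {ρ : Row}

theorem adj_triangles_addRow_inl {x y z : V} :
    (F.addRow ρ).triangles.Adj (.inl x) (.inl y) (.inl z) ↔ F.triangles.Adj x y z := by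
  simp [adj_triangles, addRow]

open scoped Classical in
theorem sum_adj_inr_inl_inl (x y : V) :
    (∑ i, if (F.addRow ρ).triangles.Adj (.inr i) (.inl x) (.inl y) then 1 else 0) +
      (if F.col x = F.col y then 1 else 0) + (if x = y then 1 else 0) = 2 := by
  have h := F.isTopRow_inr ρ
  have hx := notMem_range_inr (X := Fin 3) x
  have hy := notMem_range_inr (X := Fin 3) y
  rcases eq_or_ne x y with rfl | hxy
  · simp [adj_triangles]
  by_cases hc : F.col x = F.col y
  · have adj_iff (i : Fin 3) :
        (F.addRow ρ).triangles.Adj (.inr i) (.inl x) (.inl y) ↔ F.col x = i :=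
      h.adj_iff_of_col_eq hx hy (Sum.inl_injective.ne hxy) hc
    simp [adj_iff, hc, hxy]
  obtain ⟨i, hix, hiy⟩ := Fin.exists_ne_and_ne_of_two_lt (F.col x) (F.col y) (by norm_num)
  have adj_x : (F.addRow ρ).triangles.Adj (.inr (F.col x)) (.inl x) (.inl y) ↔ F.arc y x :=
    h.adj_iff_arc hx hy rfl (Ne.symm hc)
  have adj_y : (F.addRow ρ).triangles.Adj (.inr (F.col y)) (.inl x) (.inl y) ↔ F.arc x y :=
    TripleSystem.adj_swap_right.trans (h.adj_iff_arc hy hx rfl hc)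
  have adj_i : (F.addRow ρ).triangles.Adj (.inr i) (.inl x) (.inl y) :=
    h.adj_of_col_ne hx hy hc hix.symm hiy.symm
  have harc := F.arc_of_col_ne hc
  rw [sum_fin_three_of_ne hc hix.symm hiy.symm]
  simp only [adj_x, adj_y, adj_i, hc, hxy, harc]
  cases F.arc y x <;> rfl

open scoped Classical in
theorem sum_adj_inr_inr_inl (x : V) :
    (∑ i, ∑ j, if (F.addRow ρ).triangles.Adj (.inr i) (.inr j) (.inl x) then 1 else 0) = 4 := by
  have adj_iff (i j : Fin 3) : (F.addRow ρ).triangles.Adj (.inr i) (.inr j) (.inl x) ↔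
      i ≠ j ∧ (F.col x = i ∨ F.col x = j) := by
    rcases eq_or_ne i j with rfl | hij
    · simp [adj_triangles]
    · simp only [(F.isTopRow_inr ρ).adj_pair_iff (notMem_range_inr x) hij, ne_eq, hij]
      simp [addRow]
  simp only [adj_iff]
  generalize F.col x = c
  decide +revert

open scoped Classical in
theorem sum_adj_inr_inr_inr :
    (∑ i, ∑ j, ∑ l, if (F.addRow ρ).triangles.Adj (.inr i) (.inr j) (.inr l) then 1 else 0) =
      6 := by
  have adj_iff (i j l : Fin 3) : (F.addRow ρ).triangles.Adj (.inr i) (.inr j) (.inr l) ↔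
      i ≠ j ∧ i ≠ l ∧ j ≠ l :=
    ⟨fun h ↦ by simpa using h.1, fun h ↦ (F.isTopRow_inr ρ).adj_row h.1 h.2.1 h.2.2⟩
  simp only [adj_iff]
  decide

variable [Fintype V]

/-- The number of vertices of a column. -/
def colSize (F : ColumnTournament V) (c : Fin 3) : ℕ := #{x | F.col x = c}

theorem sum_colSize (F : ColumnTournament V) : ∑ c, F.colSize c = Fintype.card V :=
  (Finset.card_eq_sum_card_fiberwise fun _ _ ↦ Finset.mem_coe.2 (Finset.mem_univ _)).symm

theorem sum_sum_col_eq (F : ColumnTournament V) :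
    (∑ x, ∑ y, if F.col x = F.col y then 1 else 0) = ∑ c, F.colSize c ^ 2 := by
  have inner (x : V) : (∑ y, if F.col x = F.col y then 1 else 0) = F.colSize (F.col x) := by
    simp only [colSize, Finset.card_filter, eq_comm]
  simp only [inner]
  rw [← Finset.sum_fiberwise (s := Finset.univ) (g := F.col)]
  refine Finset.sum_congr rfl fun c _ ↦ ?_
  rw [Finset.sum_congr rfl fun x hx ↦ congrArg F.colSize (Finset.mem_filter.1 hx).2,
    Finset.sum_const, smul_eq_mul, sq, colSize]

theorem tripleCount_addRow (F : ColumnTournament V) (ρ : Row) :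
    (F.addRow ρ).triangles.tripleCount + 3 * (∑ c, F.colSize c ^ 2 + Fintype.card V) =
      F.triangles.tripleCount + 6 * Fintype.card V ^ 2 + 12 * Fintype.card V + 6 := by
  classical
  have inr_inl_inl :
      (∑ x, ∑ y, ∑ i, if (F.addRow ρ).triangles.Adj (.inr i) (.inl x) (.inl y) then 1 else 0) +
        ∑ c, F.colSize c ^ 2 + Fintype.card V = 2 * Fintype.card V ^ 2 := by
    calc
      _ = ∑ x, ∑ y, (((∑ i,
          if (F.addRow ρ).triangles.Adj (.inr i) (.inl x) (.inl y) then 1 else 0) +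
            if F.col x = F.col y then 1 else 0) + if x = y then 1 else 0) := by
        simp [Finset.sum_add_distrib, ← sum_sum_col_eq]
      _ = _ := by
        simp only [sum_adj_inr_inl_inl, Finset.sum_const, Finset.card_univ, smul_eq_mul]
        ring
  have inr_inr_inl :
      (∑ x, ∑ i, ∑ j, if (F.addRow ρ).triangles.Adj (.inr i) (.inr j) (.inl x) then 1 else 0) =
        4 * Fintype.card V := by
    simp only [sum_adj_inr_inr_inl, Finset.sum_const, Finset.card_univ, smul_eq_mul, mul_comm]
  rw [TripleSystem.tripleCount_sum, inr_inr_inl, sum_adj_inr_inr_inr]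
  simp only [adj_triangles_addRow_inl, ← TripleSystem.tripleCount_eq_sum]
  linarith

end ColumnTournament

/-! ### Balanced and extremal tournaments -/

theorem six_mul_turanBound_add_three (n : ℕ) :
    6 * turanBound (n + 3) +
        3 * ((3 * (n / 3) ^ 2 + 2 * (n / 3) * (n % 3) + n % 3 : ℕ) + n : ℚ) =
      6 * turanBound n + 6 * (n : ℚ) ^ 2 + 12 * n + 6 := by
  have hdiv : (n + 3) / 3 = n / 3 + 1 := by omega
  have hmod : (n + 3) % 3 = n % 3 := by omega
  have hn : (n : ℚ) = 3 * (n / 3 : ℕ) + (n % 3 : ℕ) := mod_cast (Nat.div_add_mod n 3).symm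
  rw [turanBound, turanBound, hdiv, hmod, hn]
  generalize n / 3 = q
  have : n % 3 = 0 ∨ n % 3 = 1 ∨ n % 3 = 2 := by omega
  rcases this with h | h | h <;> simp [h] <;> ring

theorem sum_sq_eq_of_le_add_one {s : Fin 3 → ℕ} (h : ∀ c c', s c ≤ s c' + 1) {n : ℕ}
    (hn : ∑ c, s c = n) : ∑ c, s c ^ 2 = 3 * (n / 3) ^ 2 + 2 * (n / 3) * (n % 3) + n % 3 := by
  rw [Fin.sum_univ_three] at hn
  have near (c : Fin 3) : s c = n / 3 ∨ s c = n / 3 + 1 := by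
    have := h c 0
    have := h c 1
    have := h c 2
    have := h 0 c
    have := h 1 c
    have := h 2 c
    fin_cases c <;> dsimp only [Fin.isValue, Fin.zero_eta, Fin.mk_one, Fin.reduceFinMk] at * <;>
      omega
  have hmod := Nat.div_add_mod n 3
  rw [Fin.sum_univ_three]
  generalize n / 3 = q at *
  generalize n % 3 = e at *
  obtain rfl : e = s 0 + s 1 + s 2 - 3 * q := by omega
  rcases near 0 with h₀ | h₀ <;> rcases near 1 with h₁ | h₁ <;> rcases near 2 with h₂ | h₂ <;>
    · rw [h₀, h₁, h₂]
      grind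

namespace ColumnTournament

variable {V : Type*} [Fintype V] {F : ColumnTournament V} {ρ : Row}

/-- The column sizes differ by at most one. -/
def IsBalanced (F : ColumnTournament V) : Prop := ∀ c c', F.colSize c ≤ F.colSize c' + 1

theorem colSize_addRow (F : ColumnTournament V) (ρ : Row) (c : Fin 3) :
    (F.addRow ρ).colSize c = F.colSize c + ρ.colSize c := by
  simp only [colSize, Finset.card_filter, Fintype.sum_sum_type]
  rfl

/-- A balanced column tournament whose triangles attain the Turán bound; `tripleCount` counts each
triangle six times. -/
structure IsExtremal (F : ColumnTournament V) : Prop where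
  balanced : F.IsBalanced
  tripleCount_eq : (F.triangles.tripleCount : ℚ) = 6 * turanBound (Fintype.card V)

theorem IsExtremal.tripleCount_addRow (h : F.IsExtremal) (ρ : Row) :
    ((F.addRow ρ).triangles.tripleCount : ℚ) = 6 * turanBound (Fintype.card V + 3) := by
  have count : ((F.addRow ρ).triangles.tripleCount : ℚ) +
      3 * ((∑ c, F.colSize c ^ 2 : ℕ) + Fintype.card V) = F.triangles.tripleCount +
        6 * (Fintype.card V : ℚ) ^ 2 + 12 * Fintype.card V + 6 :=
    mod_cast F.tripleCount_addRow ρ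
  rw [sum_sq_eq_of_le_add_one h.balanced F.sum_colSize, h.tripleCount_eq] at count
  linarith [six_mul_turanBound_add_three (Fintype.card V)]

theorem IsExtremal.addRow (h : F.IsExtremal) (hρ : (F.addRow ρ).IsBalanced) :
    (F.addRow ρ).IsExtremal :=
  ⟨hρ, by rw [h.tripleCount_addRow, Fintype.card_sum, Fintype.card_fin]⟩

theorem IsBalanced.card_le_colSize (h : F.IsBalanced) {m : ℕ} (hm : 3 * m ≤ Fintype.card V)
    (c : Fin 3) : m ≤ F.colSize c := by
  have sum := F.sum_colSize
  rw [Fin.sum_univ_three] at sum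
  have := h 0 c
  have := h 1 c
  have := h 2 c
  fin_cases c <;> grind

theorem surjective_col_of_colSize_pos (h : ∀ c, 0 < F.colSize c) : Function.Surjective F.col :=
  fun c ↦ (Finset.card_pos.1 (h c)).imp fun x hx ↦ by simpa using hx

theorem exists_ne_col_eq_of_one_lt_colSize {c : Fin 3} (h : 1 < F.colSize c) (x : V) :
    ∃ y ≠ x, F.col y = c := by
  obtain ⟨y, hy, hne⟩ := Finset.exists_mem_ne h x
  exact ⟨y, hne, by simpa using hy⟩

theorem IsBalanced.exists_colSize_eq (h : F.IsBalanced) :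
    ∃ l i j : Fin 3, l ≠ i ∧ l ≠ j ∧ i ≠ j ∧ F.colSize i = F.colSize j := by
  have h₀₁ := h 0 1
  have h₁₀ := h 1 0
  have h₀₂ := h 0 2
  have h₂₀ := h 2 0
  have h₁₂ := h 1 2
  have h₂₁ := h 2 1
  have : F.colSize 0 = F.colSize 1 ∨ F.colSize 0 = F.colSize 2 ∨ F.colSize 1 = F.colSize 2 := by
    omega
  rcases this with h | h | h
  exacts [⟨2, 0, 1, by decide, by decide, by decide, h⟩,
    ⟨1, 0, 2, by decide, by decide, by decide, h⟩, ⟨0, 1, 2, by decide, by decide, by decide, h⟩]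

theorem IsBalanced.exists_odd_column (h : F.IsBalanced) (hmod : Fintype.card V % 3 ≠ 0) :
    ∃ (l : Fin 3) (q : ℕ), (∀ c, F.colSize c = q + if c = l then 1 else 0) ∨
      ∀ c, F.colSize c + (if c = l then 1 else 0) = q := by
  obtain ⟨l, i, j, hli, hlj, hij, heq⟩ := h.exists_colSize_eq
  have sum := F.sum_colSize
  rw [sum_fin_three_of_ne hli hlj hij] at sum
  have h₁ := h l i
  have h₂ := h i l
  have size_c (c : Fin 3) (hc : c ≠ l) : F.colSize c = F.colSize i := by
    rcases eq_or_eq_or_eq_of_ne hli hlj hij c with rfl | rfl | rfl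
    exacts [(hc rfl).elim, rfl, heq.symm]
  refine ⟨l, F.colSize i, ?_⟩
  obtain hlt | hgt : F.colSize l = F.colSize i + 1 ∨ F.colSize l + 1 = F.colSize i := by omega
  · exact .inl fun c ↦ by split_ifs with hc; exacts [hc ▸ hlt, size_c c hc]
  · exact .inr fun c ↦ by split_ifs with hc; exacts [hc ▸ hgt, size_c c hc]

end ColumnTournament

/-! ### The six balanced rows -/

namespace ColumnTournament

/-- The row with prescribed columns. It may contain one pair `i < j` of vertices lying in each
other's columns, and `β` tells whether `i` beats `j`. -/
def Row.ofCol (col : Fin 3 → Fin 3) (col_ne : ∀ i, col i ≠ i) (β : Bool) : Row where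
  col := col
  arc i j := col i = j ∧ (col j = i → (i < j ↔ β))
  arc_of_col_eq {i j} h := by
    have := col_ne j
    grind
  arc_of_col_ne {i j} h := by
    have := col_ne i
    have := col_ne j
    grind
  no_four_cycle {x x' y y'} hx hy h₁ h₂ h₃ h₄ := by
    have := col_ne x
    grind
  isTopRow :=
    { injective := Function.injective_id
      loses i := ⟨col_ne i, fun x hx ↦ (hx ⟨x, rfl⟩).elim⟩
      arc_row := by grind }

/-- The two fixed-point-free cyclic arrangements of columns. -/
def cyclicCol (s : Bool) (i : Fin 3) : Fin 3 := i + if s then 1 else 2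

/-- Column arrangements restoring the balance of a tournament whose column `l` has one vertex more
(`surplus = true`), respectively one less, than the other two: they avoid column `l`,
respectively use it twice. For `i ≠ l`, `-(i + l)` is the third column. -/
def oddCol (surplus : Bool) (l : Fin 3) (s : Bool) (i : Fin 3) : Fin 3 :=
  if i = l then cyclicCol s l else if surplus then -(i + l) else l

theorem cyclicCol_ne (s : Bool) (i : Fin 3) : cyclicCol s i ≠ i := by
  decide +revert

theorem oddCol_ne (surplus : Bool) (l : Fin 3) (s : Bool) (i : Fin 3) :
    oddCol surplus l s i ≠ i := by
  decide +revert

/-- An index for the six rows that can be added to a balanced column tournament. -/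
abbrev Letter : Type := Bool ⊕ Bool × Bool

/-- The six rows keeping a tournament with odd column `l` balanced. -/
def letterRow (surplus : Bool) (l : Fin 3) : Letter → Row
  | .inl s => .ofCol (cyclicCol s) (cyclicCol_ne s) true
  | .inr (s, β) => .ofCol (oddCol surplus l s) (oddCol_ne surplus l s) β

theorem letterRow_injective (surplus : Bool) (l : Fin 3) :
    Function.Injective (letterRow surplus l) := by
  have ext_iff (c c' : Letter) :
      (letterRow surplus l c).col = (letterRow surplus l c').col →
      (letterRow surplus l c).arc = (letterRow surplus l c').arc → c = c' := by
    decide +revert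
  exact fun c c' h ↦ ext_iff c c' (congrArg (·.col) h) (congrArg (·.arc) h)

variable {V : Type*} [Fintype V] {F : ColumnTournament V}

theorem IsBalanced.exists_rows (h : F.IsBalanced) (hmod : Fintype.card V % 3 ≠ 0) :
    ∃ ρ : Letter → Row, Function.Injective ρ ∧ ∀ c, (F.addRow (ρ c)).IsBalanced := by
  obtain ⟨l, q, hsize | hsize⟩ := h.exists_odd_column hmod
  · refine ⟨letterRow true l, letterRow_injective true l, fun letter c c' ↦ ?_⟩
    have row_size (c c' : Fin 3) : (letterRow true l letter).colSize c + (if c = l then 1 else 0) ≤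
        (letterRow true l letter).colSize c' + (if c' = l then 1 else 0) + 1 := by
      clear hsize
      decide +revert
    have := row_size c c'
    rw [colSize_addRow, colSize_addRow]
    have := hsize c
    have := hsize c'
    omega
  · refine ⟨letterRow false l, letterRow_injective false l, fun letter c c' ↦ ?_⟩
    have row_size (c c' : Fin 3) :
        (letterRow false l letter).colSize c + (if c' = l then 1 else 0) ≤
        (letterRow false l letter).colSize c' + (if c = l then 1 else 0) + 1 := by
      clear hsize
      decide +revert
    have := row_size c c'
    rw [colSize_addRow, colSize_addRow]
    have := hsize c
    have := hsize c'
    omega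

end ColumnTournament

/-! ### Rigid families -/

namespace ColumnTournament

variable {V W ι : Type*} [Fintype V]

/-- A family without isomorphisms, even permuting the columns, other than the automorphisms of its
members that fix every column. -/
def IsRigid (f : ι → ColumnTournament V) : Prop :=
  ∀ ⦃i j π⦄, Nonempty ((f i).Iso (f j) π) → i = j ∧ π = 1

theorem IsRigid.addRow {κ : Type*} {f : ι → ColumnTournament V} {ρ : ι → κ → Row}
    (hf : IsRigid f) (hρ : ∀ i, Function.Injective (ρ i))
    (hbal : ∀ p : ι × κ, ((f p.1).addRow (ρ p.1 p.2)).IsBalanced) (hcard : 3 ≤ Fintype.card V)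
    (hsurj : ∀ i, Function.Surjective (f i).col) :
    IsRigid fun p : ι × κ ↦ (f p.1).addRow (ρ p.1 p.2) := by
  rintro ⟨i, c⟩ ⟨j, c'⟩ π ⟨e⟩
  have htwo (a : Fin 3) : 1 < ((f i).addRow (ρ i c)).colSize a :=
    (hbal (i, c)).card_le_colSize (by simpa using by omega) a
  obtain ⟨hiso, hcol, harc⟩ := iso_and_row_eq_of_iso_addRow e (hsurj i)
    fun a x ↦ exists_ne_col_eq_of_one_lt_colSize (htwo a) x
  obtain ⟨rfl, rfl⟩ := hf hiso
  obtain rfl : c = c' := hρ i (Row.ext (funext fun a ↦ (hcol a).symm)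
    (funext₂ fun a b ↦ (harc a b).symm))
  exact ⟨rfl, rfl⟩

theorem IsRigid.exists_mul_letter {f : ι → ColumnTournament V} (hf : IsRigid f)
    (hext : ∀ i, (f i).IsExtremal) (hcard : 3 < Fintype.card V) (hmod : Fintype.card V % 3 ≠ 0) :
    ∃ g : ι × Letter → ColumnTournament (V ⊕ Fin 3), IsRigid g ∧ ∀ p, (g p).IsExtremal := by
  choose ρ hρ hbal using fun i ↦ (hext i).balanced.exists_rows hmod
  exact ⟨_, hf.addRow hρ (fun p ↦ hbal p.1 p.2) hcard.le fun i ↦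
    surjective_col_of_colSize_pos ((hext i).balanced.card_le_colSize hcard.le),
    fun p ↦ (hext p.1).addRow (hbal p.1 p.2)⟩

theorem IsRigid.exists_mul_six_pow {V ι : Type} [Fintype V] [Fintype ι]
    {f : ι → ColumnTournament V} (hf : IsRigid f) (hext : ∀ i, (f i).IsExtremal)
    (hcard : 3 < Fintype.card V) (hmod : Fintype.card V % 3 ≠ 0) (q : ℕ) :
    ∃ (W κ : Type) (_ : Fintype W) (_ : Fintype κ) (g : κ → ColumnTournament W), IsRigid g ∧
      (∀ i, (g i).IsExtremal) ∧ Fintype.card W = Fintype.card V + 3 * q ∧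
      Fintype.card κ = Fintype.card ι * 6 ^ q := by
  induction q with
  | zero => exact ⟨V, ι, inferInstance, inferInstance, f, hf, hext, by simp, by simp⟩
  | succ q ih =>
    obtain ⟨W, κ, _, _, g, hg, hgext, hW, hκ⟩ := ih
    obtain ⟨g', hg', hg'ext⟩ := hg.exists_mul_letter hgext (by omega) (by omega)
    refine ⟨W ⊕ Fin 3, κ × Letter, inferInstance, inferInstance, g', hg', hg'ext, ?_, ?_⟩
    · rw [Fintype.card_sum, Fintype.card_fin, hW]
      ring
    · simp only [Fintype.card_prod, Fintype.card_sum, Fintype.card_bool, hκ]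
      ring

/-- The column tournament with at most one vertex in each column and all arcs increasing. -/
def ascending (d : ℕ) (hd : d ≤ 3) : ColumnTournament (Fin d) where
  col := Fin.castLE hd
  arc x y := x < y
  arc_of_col_eq h := by simp [Fin.castLE_inj.1 h]
  arc_of_col_ne h := by
    have := mt (congrArg (Fin.castLE hd)) h
    grind
  no_four_cycle _ _ h₁ h₂ h₃ h₄ := by
    grind

theorem isBalanced_ascending {d : ℕ} (hd : d ≤ 3) : (ascending d hd).IsBalanced := by
  intro c c'
  have : (ascending d hd).colSize c ≤ 1 := by
    rw [colSize, Finset.card_le_one]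
    intro x hx y hy
    rw [Finset.mem_filter_univ] at hx hy
    exact Fin.castLE_injective hd (hx.trans hy.symm)
  omega

theorem isExtremal_ascending {d : ℕ} (hd : d ≤ 2) :
    (ascending d (hd.trans (by norm_num))).IsExtremal where
  balanced := isBalanced_ascending _
  tripleCount_eq := by
    have no_triangle : (ascending d (hd.trans (by norm_num))).triangles.tripleCount = 0 := by
      classical
      rw [TripleSystem.tripleCount, Fintype.card_eq_zero_iff]
      refine ⟨fun ⟨⟨x, y, z⟩, ⟨hxy, hxz, hyz⟩, _⟩ ↦ ?_⟩
      dsimp only at hxy hxz hyz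
      omega
    rw [no_triangle, Fintype.card_fin]
    interval_cases d <;> simp [turanBound]

/-- An isomorphism invariant of a pair of columns: the sum, over the vertices of column `c`, of the
squares of their numbers of arcs into column `c'`. -/
def outDegreeSq (F : ColumnTournament V) (c c' : Fin 3) : ℕ :=
  ∑ x with F.col x = c, #{y | F.col y = c' ∧ F.arc x y} ^ 2

theorem Iso.outDegreeSq_eq [Fintype W] {F : ColumnTournament V} {G : ColumnTournament W}
    {π : Equiv.Perm (Fin 3)} (e : F.Iso G π) (c c' : Fin 3) :
    G.outDegreeSq (π c) (π c') = F.outDegreeSq c c' := by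
  have col_eq_iff (x : V) (a : Fin 3) : G.col (e.toEquiv x) = π a ↔ F.col x = a := by
    rw [← Equiv.toFun_as_coe, e.col_apply, π.injective.eq_iff]
  have outDegree (x : V) : #{y | F.col y = c' ∧ F.arc x y} =
      #{y | G.col y = π c' ∧ G.arc (e.toEquiv x) y} :=
    Finset.card_equiv e.toEquiv fun y ↦ by
      simp [← e.arc_apply x y, col_eq_iff]
  refine (Finset.sum_equiv e.toEquiv (fun x ↦ ?_) fun x _ ↦ ?_).symm
  · simp only [Finset.mem_filter_univ, col_eq_iff]
  · rw [outDegree]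

theorem isRigid_of_outDegreeSq {f : ι → ColumnTournament V}
    (h : ∀ i j (π : Equiv.Perm (Fin 3)),
      (∀ c c', (f j).outDegreeSq (π c) (π c') = (f i).outDegreeSq c c') → i = j ∧ π = 1) :
    IsRigid f :=
  fun i j π ⟨e⟩ ↦ h i j π e.outDegreeSq_eq

theorem isRigid_addRow_ascending_one :
    IsRigid fun i : Fin 3 ↦ (ascending 1 (by norm_num)).addRow (letterRow true 0
      (![.inl true, .inr (true, true), .inr (true, false)] i)) :=
  isRigid_of_outDegreeSq (by decide)

theorem isRigid_addRow_ascending_two :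
    IsRigid fun c : Letter ↦ (ascending 2 (by norm_num)).addRow (letterRow false 2 c) :=
  isRigid_of_outDegreeSq (by decide)

theorem exists_nonisomorphic_card_three_mul_add_one (q : ℕ) :
    ∃ (V ι : Type) (_ : Fintype V) (_ : Fintype ι) (f : ι → ColumnTournament V),
      (∀ i, (f i).IsExtremal) ∧ (∀ ⦃i j π⦄, Nonempty ((f i).Iso (f j) π) → i = j) ∧
      Fintype.card V = 3 * q + 1 ∧ 6 ^ q ≤ 2 * Fintype.card ι := by
  rcases q with _ | q
  · exact ⟨Fin 1, Unit, inferInstance, inferInstance, fun _ ↦ ascending 1 (by norm_num),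
      fun _ ↦ isExtremal_ascending (by norm_num), fun _ _ _ _ ↦ rfl, by simp, by simp⟩
  have extremal (c : Letter) :
      ((ascending 1 (by norm_num)).addRow (letterRow true 0 c)).IsExtremal :=
    (isExtremal_ascending (by norm_num)).addRow (by unfold IsBalanced; decide +revert)
  obtain ⟨V, ι, _, _, f, hf, hext, hV, hι⟩ :=
    isRigid_addRow_ascending_one.exists_mul_six_pow (fun _ ↦ extremal _) (by simp) (by simp) q
  refine ⟨V, ι, inferInstance, inferInstance, f, hext, fun i j π h ↦ (hf h).1, ?_, ?_⟩
  · rw [hV, Fintype.card_sum, Fintype.card_fin, Fintype.card_fin]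
    ring
  · rw [hι, Fintype.card_fin]
    linarith [pow_succ 6 q]

theorem exists_nonisomorphic_card_three_mul_add_two (q : ℕ) :
    ∃ (V ι : Type) (_ : Fintype V) (_ : Fintype ι) (f : ι → ColumnTournament V),
      (∀ i, (f i).IsExtremal) ∧ (∀ ⦃i j π⦄, Nonempty ((f i).Iso (f j) π) → i = j) ∧
      Fintype.card V = 3 * q + 2 ∧ 6 ^ q ≤ Fintype.card ι := by
  rcases q with _ | q
  · exact ⟨Fin 2, Unit, inferInstance, inferInstance, fun _ ↦ ascending 2 (by norm_num),
      fun _ ↦ isExtremal_ascending le_rfl, fun _ _ _ _ ↦ rfl, by simp, by simp⟩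
  have extremal (c : Letter) :
      ((ascending 2 (by norm_num)).addRow (letterRow false 2 c)).IsExtremal :=
    (isExtremal_ascending le_rfl).addRow (by unfold IsBalanced; decide +revert)
  obtain ⟨V, ι, _, _, f, hf, hext, hV, hι⟩ :=
    isRigid_addRow_ascending_two.exists_mul_six_pow extremal (by simp) (by simp) q
  refine ⟨V, ι, inferInstance, inferInstance, f, hext, fun i j π h ↦ (hf h).1, ?_, ?_⟩
  · rw [hV, Fintype.card_sum, Fintype.card_fin, Fintype.card_fin]
    ring
  · simp only [hι, Fintype.card_sum, Fintype.card_prod, Fintype.card_bool]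
    exact (pow_succ' 6 q).le

theorem IsExtremal.card_faces_addRow {F : ColumnTournament V} (h : F.IsExtremal) (ρ : Row) {n : ℕ}
    (hn : Fintype.card V + 3 = n) (e : V ⊕ Fin 3 ≃ Fin n) :
    (#((F.addRow ρ).triangles.map e).faces : ℚ) = turanBound n := by
  have count := h.tripleCount_addRow ρ
  rw [hn, ((F.addRow ρ).triangles.isoMap e).tripleCount_eq,
    TripleSystem.tripleCount_eq_six_mul_card_faces] at count
  push_cast at count
  linarith

theorem exists_triangleFamilies [Fintype ι] {f : ι → ColumnTournament V}
    (hext : ∀ i, (f i).IsExtremal) (hiso : ∀ ⦃i j π⦄, Nonempty ((f i).Iso (f j) π) → i = j)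
    {n : ℕ} (hn : Fintype.card V + 3 = n) :
    ∃ 𝒯 : Finset (Finset (Finset (Fin n))),
      (∀ T ∈ 𝒯, ValidTriangleFamily n T ∧ (T.card : ℚ) = turanBound n) ∧
      (∀ T₁ ∈ 𝒯, ∀ T₂ ∈ 𝒯, T₁ ≠ T₂ → ¬ IsoTriangleFamily n T₁ T₂) ∧
      𝒯.card = Fintype.card ι := by
  let ρ : Row := .ofCol (cyclicCol true) (cyclicCol_ne true) true
  let e : V ⊕ Fin 3 ≃ Fin n := Fintype.equivFinOfCardEq (by simpa using hn)
  let T (i : ι) : Finset (Finset (Fin n)) := (((f i).addRow ρ).triangles.map e).faces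
  have eq_of_iso {i j : ι} (h : IsoTriangleFamily n (T i) (T j)) : i = j := by
    obtain ⟨φ⟩ := TripleSystem.nonempty_iso_of_isoTriangleFamily h
    obtain ⟨π, hπ⟩ := exists_iso_of_iso_triangles_addRow <|
      ((TripleSystem.isoMap _ e).trans φ).trans (TripleSystem.isoMap _ e).symm
    exact hiso hπ
  have T_injective : Function.Injective T := fun i j h ↦ eq_of_iso (h ▸ ⟨1, by simp⟩)
  refine ⟨Finset.univ.map ⟨T, T_injective⟩, ?_, ?_, by simp⟩
  · simp only [Finset.mem_map, Finset.mem_univ, true_and, Function.Embedding.coeFn_mk,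
      forall_exists_index, forall_apply_eq_imp_iff]
    exact fun i ↦ ⟨TripleSystem.validTriangleFamily_faces fun a b c d ↦
      ((f i).addRow ρ).no_tetrahedron _ _ _ _, (hext i).card_faces_addRow ρ hn e⟩
  · simp only [Finset.mem_map, Finset.mem_univ, true_and, Function.Embedding.coeFn_mk,
      forall_exists_index, forall_apply_eq_imp_iff]
    exact fun i j hne h ↦ hne (congrArg T (eq_of_iso h))

end ColumnTournament

end TuranExtremal

/-- The main theorem: for `n = 3k + 1` (resp. `n = 3k + 2`) with `k ≥ 1`, there are at
least `(1/2)·6^(k−1)` (resp. `6^(k−1)`) pairwise non-isomorphic two-dimensional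
simplicial complexes on `n` vertices, with all minimal non-faces on 3 vertices and no
faces on 4 vertices, attaining the bound of Turán's (3,4)-conjecture. -/
theorem many_nonisomorphic_turan_extremal (k : ℕ) (hk : 1 ≤ k) (n : ℕ)
    (hn : n = 3 * k + 1 ∨ n = 3 * k + 2) :
    ∃ 𝒯 : Finset (Finset (Finset (Fin n))),
      (∀ T ∈ 𝒯, ValidTriangleFamily n T ∧ (T.card : ℚ) = turanBound n) ∧
      (∀ T₁ ∈ 𝒯, ∀ T₂ ∈ 𝒯, T₁ ≠ T₂ → ¬ IsoTriangleFamily n T₁ T₂) ∧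
      (n = 3 * k + 1 → (1 / 2 : ℚ) * 6 ^ (k - 1) ≤ (𝒯.card : ℚ)) ∧
      (n = 3 * k + 2 → (6 : ℚ) ^ (k - 1) ≤ (𝒯.card : ℚ)) := by
  rcases hn with hn | hn
  · obtain ⟨V, ι, _, _, f, hext, hiso, hV, hι⟩ :=
      TuranExtremal.ColumnTournament.exists_nonisomorphic_card_three_mul_add_one (k - 1)
    obtain ⟨𝒯, hvalid, hpairwise, hcard⟩ :=
      TuranExtremal.ColumnTournament.exists_triangleFamilies hext hiso (n := n) (by omega)
    have hι' : (6 : ℚ) ^ (k - 1) ≤ 2 * Fintype.card ι := mod_cast hι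
    refine ⟨𝒯, hvalid, hpairwise, fun _ ↦ ?_, by omega⟩
    rw [hcard]
    linarith
  · obtain ⟨V, ι, _, _, f, hext, hiso, hV, hι⟩ :=
      TuranExtremal.ColumnTournament.exists_nonisomorphic_card_three_mul_add_two (k - 1)
    obtain ⟨𝒯, hvalid, hpairwise, hcard⟩ :=
      TuranExtremal.ColumnTournament.exists_triangleFamilies hext hiso (n := n) (by omega)
    refine ⟨𝒯, hvalid, hpairwise, by omega, fun _ ↦ ?_⟩
    rw [hcard]
    exact_mod_cast hι
end
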